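/- arXiv:1603.05702 — 3 statements merged into one kernel-verified Lean document; each statement's English description precedes it below -/
import Mathlib

section
/- Let A be a semigroup in a braided monoidal category C whose multiplication m is non-degenerate with respect to some class of objects containing A, and let t₁, t₂, t₃, t₄ : A⊗A → A⊗A be morphisms. If, for distinct indices i, j, k ∈ {1,2,3,4}, the compatibility relation involving tᵢ and tⱼ holds and the compatibility relation involving tᵢ and t_k holds, then the compatibility relation involving tⱼ and t_k also holds. -/
open CategoryTheory Category MonoidalCategory

universe v u

namespace WeakMultiplierBimonoid

variable {C : Type u} [Category.{v} C] [MonoidalCategory C] [BraidedCategory C]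

/-- For `f : A ⊗ A ⟶ A ⊗ A`, the morphism `f ⊗ 1 : A ⊗ (A ⊗ A) ⟶ A ⊗ (A ⊗ A)`. -/
def wl {A : C} (f : A ⊗ A ⟶ A ⊗ A) : A ⊗ (A ⊗ A) ⟶ A ⊗ (A ⊗ A) :=
  (α_ A A A).inv ≫ (f ▷ A) ≫ (α_ A A A).hom

/-- For `f : A ⊗ A ⟶ A`, the morphism `f ⊗ 1 : A ⊗ (A ⊗ A) ⟶ A ⊗ A`. -/
def ml {A : C} (f : A ⊗ A ⟶ A) : A ⊗ (A ⊗ A) ⟶ A ⊗ A :=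
  (α_ A A A).inv ≫ (f ▷ A)

/-- A morphism `v : Z ⊗ V ⟶ W` is non-degenerate on the left with respect to a class
`𝒴` of objects if for every `X` and every `Y ∈ 𝒴` the map
`Hom(X, V ⊗ Y) → Hom(Z ⊗ X, W ⊗ Y)`, `g ↦ (v ⊗ 1) ∘ (1 ⊗ g)`, is injective. -/
def NdLeftOn {Z V W : C} (v : Z ⊗ V ⟶ W) (𝒴 : Set C) : Prop :=
  ∀ (X : C), ∀ Y ∈ 𝒴, Function.Injective
    (fun g : X ⟶ V ⊗ Y => (Z ◁ g) ≫ (α_ Z V Y).inv ≫ (v ▷ Y))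

/-- Non-degenerate on the right with respect to `𝒴`: `v ∘ c` is non-degenerate on the
left with respect to `𝒴`. -/
def NdRightOn {Z V W : C} (v : Z ⊗ V ⟶ W) (𝒴 : Set C) : Prop :=
  NdLeftOn ((β_ V Z).hom ≫ v) 𝒴

/-- Relation (c12): `(m ⊗ 1) ∘ (1 ⊗ t₁) = (1 ⊗ m) ∘ (t₂ ⊗ 1)`. -/
def C12 {A : C} (m : A ⊗ A ⟶ A) (t₁ t₂ : A ⊗ A ⟶ A ⊗ A) : Prop :=
  (A ◁ t₁) ≫ ml m = wl t₂ ≫ (A ◁ m)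

/-- Relation (c13): `(1 ⊗ m) ∘ (1 ⊗ c) ∘ (t₁ ⊗ 1) = (1 ⊗ m) ∘ (t₃ ⊗ 1) ∘ (1 ⊗ c)`. -/
def C13 {A : C} (m : A ⊗ A ⟶ A) (t₁ t₃ : A ⊗ A ⟶ A ⊗ A) : Prop :=
  wl t₁ ≫ (A ◁ (β_ A A).hom) ≫ (A ◁ m)
    = (A ◁ (β_ A A).hom) ≫ wl t₃ ≫ (A ◁ m)

/-- Relation (c14): `(m ⊗ 1) ∘ (c ⊗ 1) ∘ (1 ⊗ t₁) = (1 ⊗ m) ∘ (t₄ ⊗ 1)`. -/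
def C14 {A : C} (m : A ⊗ A ⟶ A) (t₁ t₄ : A ⊗ A ⟶ A ⊗ A) : Prop :=
  (A ◁ t₁) ≫ wl (β_ A A).hom ≫ ml m = wl t₄ ≫ (A ◁ m)

/-- Relation (c23): `(1 ⊗ m) ∘ (1 ⊗ c) ∘ (t₂ ⊗ 1) = (m ⊗ 1) ∘ (1 ⊗ t₃)`. -/
def C23 {A : C} (m : A ⊗ A ⟶ A) (t₂ t₃ : A ⊗ A ⟶ A ⊗ A) : Prop :=
  wl t₂ ≫ (A ◁ (β_ A A).hom) ≫ (A ◁ m) = (A ◁ t₃) ≫ ml m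

/-- Relation (c24): `(m ⊗ 1) ∘ (c ⊗ 1) ∘ (1 ⊗ t₂) = (m ⊗ 1) ∘ (1 ⊗ t₄) ∘ (c ⊗ 1)`. -/
def C24 {A : C} (m : A ⊗ A ⟶ A) (t₂ t₄ : A ⊗ A ⟶ A ⊗ A) : Prop :=
  (A ◁ t₂) ≫ wl (β_ A A).hom ≫ ml m = wl (β_ A A).hom ≫ (A ◁ t₄) ≫ ml m

/-- Relation (c34): `(m ⊗ 1) ∘ (c ⊗ 1) ∘ (1 ⊗ t₃) = (1 ⊗ m) ∘ (1 ⊗ c) ∘ (t₄ ⊗ 1)`. -/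
def C34 {A : C} (m : A ⊗ A ⟶ A) (t₃ t₄ : A ⊗ A ⟶ A ⊗ A) : Prop :=
  (A ◁ t₃) ≫ wl (β_ A A).hom ≫ ml m = wl t₄ ≫ (A ◁ (β_ A A).hom) ≫ (A ◁ m)

/-- The compatibility relation "involving `tᵢ` and `tⱼ`", for indices in `{1,2,3,4}`. -/
def compatRel {A : C} (m : A ⊗ A ⟶ A) (t₁ t₂ t₃ t₄ : A ⊗ A ⟶ A ⊗ A) :
    ℕ → ℕ → Prop := fun i k =>
  match i, k with
  | 1, 2 => C12 m t₁ t₂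
  | 2, 1 => C12 m t₁ t₂
  | 1, 3 => C13 m t₁ t₃
  | 3, 1 => C13 m t₁ t₃
  | 1, 4 => C14 m t₁ t₄
  | 4, 1 => C14 m t₁ t₄
  | 2, 3 => C23 m t₂ t₃
  | 3, 2 => C23 m t₂ t₃
  | 2, 4 => C24 m t₂ t₄
  | 4, 2 => C24 m t₂ t₄
  | 3, 4 => C34 m t₃ t₄
  | 4, 3 => C34 m t₃ t₄
  | _, _ => True


/-- Multiplication on the first leg. -/
def L {A X : C} (p : A ⊗ A ⟶ A) (f : X ⟶ A ⊗ A) : A ⊗ X ⟶ A ⊗ A :=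
  A ◁ f ≫ (α_ A A A).inv ≫ p ▷ A

/-- Multiplication on the second leg. -/
def R {A X : C} (q : A ⊗ A ⟶ A) (f : X ⟶ A ⊗ A) : X ⊗ A ⟶ A ⊗ A :=
  f ▷ A ≫ (α_ A A A).hom ≫ A ◁ q

theorem L_pre {A X Y : C} (p : A ⊗ A ⟶ A) (h : Y ⟶ X) (f : X ⟶ A ⊗ A) :
    L p (h ≫ f) = A ◁ h ≫ L p f := by simp [L]

theorem R_pre {A X Y : C} (p : A ⊗ A ⟶ A) (h : Y ⟶ X) (f : X ⟶ A ⊗ A) :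
    R p (h ≫ f) = h ▷ A ≫ R p f := by simp [R]

theorem LR {A X : C} (p q : A ⊗ A ⟶ A) (f : X ⟶ A ⊗ A) :
    L p (R q f) = (α_ A X A).inv ≫ R q (L p f) := by
  simp only [L, R, MonoidalCategory.whiskerLeft_comp, comp_whiskerRight, assoc]
  have h : p ▷ A ▷ A ≫ (α_ A A A).hom ≫ A ◁ q
      = (α_ (A ⊗ A) A A).hom ≫ (A ⊗ A) ◁ q ≫ p ▷ A := by
    rw [whisker_exchange]; simp
  rw [h]
  simp

theorem assocR {A : C} (m : A ⊗ A ⟶ A) (hassoc : ml m ≫ m = (A ◁ m) ≫ m) :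
    m ▷ A ≫ (β_ A A).hom ≫ m = (α_ A A A).hom ≫ A ◁ (β_ A A).hom ≫ (α_ A A A).inv ≫
      ((β_ A A).hom ≫ m) ▷ A ≫ m := by
  have h2 : m ▷ A ≫ m = (α_ A A A).hom ≫ A ◁ m ≫ m := by
    rw [← hassoc]; simp [ml]
  rw [BraidedCategory.braiding_naturality_left_assoc, comp_whiskerRight, assoc, h2,
    BraidedCategory.braiding_tensor_left_hom]
  simp

theorem assocL {A : C} (m : A ⊗ A ⟶ A) (hassoc : ml m ≫ m = (A ◁ m) ≫ m) :
    A ◁ m ≫ (β_ A A).hom ≫ m = (α_ A A A).inv ≫ (β_ A A).hom ▷ A ≫ (α_ A A A).hom ≫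
      A ◁ ((β_ A A).hom ≫ m) ≫ m := by
  rw [BraidedCategory.braiding_naturality_right_assoc, MonoidalCategory.whiskerLeft_comp, assoc,
    ← hassoc, BraidedCategory.braiding_tensor_right_hom]
  simp [ml]

theorem R_R {A X : C} (p q : A ⊗ A ⟶ A) (f : X ⟶ A ⊗ A) :
    R q (R p f) = f ▷ A ▷ A ≫ (α_ A A A).hom ▷ A ≫ (α_ A (A ⊗ A) A).hom ≫
      A ◁ (p ▷ A ≫ q) := by
  simp [R]

theorem L_L {A X : C} (p q : A ⊗ A ⟶ A) (f : X ⟶ A ⊗ A) :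
    L q (L p f) = A ◁ A ◁ f ≫ A ◁ (α_ A A A).inv ≫
      (α_ A (A ⊗ A) A).inv ≫ (A ◁ p ≫ q) ▷ A := by
  simp [L]

theorem RR {A X : C} (m : A ⊗ A ⟶ A) (hassoc : ml m ≫ m = (A ◁ m) ≫ m) (f : X ⟶ A ⊗ A) :
    R ((β_ A A).hom ≫ m) (R m f) = (α_ X A A).hom ≫ X ◁ (β_ A A).hom ≫ (α_ X A A).inv ≫
      R m (R ((β_ A A).hom ≫ m) f) := by
  have h1 : R ((β_ A A).hom ≫ m) (R m f) = f ▷ A ▷ A ≫ (α_ A A A).hom ▷ A ≫ (α_ A (A ⊗ A) A).hom ≫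
      A ◁ (m ▷ A ≫ (β_ A A).hom ≫ m) := R_R _ _ _
  have h2 : R m (R ((β_ A A).hom ≫ m) f) = f ▷ A ▷ A ≫ (α_ A A A).hom ▷ A ≫ (α_ A (A ⊗ A) A).hom ≫
      A ◁ (((β_ A A).hom ≫ m) ▷ A ≫ m) := R_R _ _ _
  have h3 : X ◁ (β_ A A).hom ≫ (α_ X A A).inv ≫ f ▷ A ▷ A
      = f ▷ (A ⊗ A) ≫ (A ⊗ A) ◁ (β_ A A).hom ≫ (α_ (A ⊗ A) A A).inv := by
    rw [← whisker_exchange_assoc]; simp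
  rw [h1, h2, assocR m hassoc, reassoc_of% h3]
  simp

theorem LL {A X : C} (m : A ⊗ A ⟶ A) (hassoc : ml m ≫ m = (A ◁ m) ≫ m) (f : X ⟶ A ⊗ A) :
    L ((β_ A A).hom ≫ m) (L m f) = (α_ A A X).inv ≫ (β_ A A).hom ▷ X ≫ (α_ A A X).hom ≫
      L m (L ((β_ A A).hom ≫ m) f) := by
  have h1 : L ((β_ A A).hom ≫ m) (L m f) = A ◁ A ◁ f ≫ A ◁ (α_ A A A).inv ≫
      (α_ A (A ⊗ A) A).inv ≫ (A ◁ m ≫ (β_ A A).hom ≫ m) ▷ A := L_L _ _ _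
  have h2 : L m (L ((β_ A A).hom ≫ m) f) = A ◁ A ◁ f ≫ A ◁ (α_ A A A).inv ≫
      (α_ A (A ⊗ A) A).inv ≫ (A ◁ ((β_ A A).hom ≫ m) ≫ m) ▷ A := L_L _ _ _
  have h3 : (β_ A A).hom ▷ X ≫ (α_ A A X).hom ≫ A ◁ A ◁ f
      = (A ⊗ A) ◁ f ≫ (β_ A A).hom ▷ (A ⊗ A) ≫ (α_ A A (A ⊗ A)).hom := by
    rw [whisker_exchange_assoc]; simp
  rw [h1, h2, assocL m hassoc, reassoc_of% h3]
  simp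

/-- `R` in terms of `L`, first version. -/
theorem R_conj {A X : C} (m : A ⊗ A ⟶ A) (f : X ⟶ A ⊗ A) :
    (β_ A X).hom ≫ R m f = L ((β_ A A).hom ≫ m) (f ≫ (β_ A A).inv) ≫ (β_ A A).hom := by
  simp only [L, R, MonoidalCategory.whiskerLeft_comp, comp_whiskerRight, assoc]
  rw [← BraidedCategory.braiding_naturality_right_assoc, BraidedCategory.braiding_naturality_left,
    BraidedCategory.braiding_naturality_left_assoc, BraidedCategory.braiding_tensor_right_hom,
    BraidedCategory.braiding_tensor_left_hom]
  simp

theorem R_conj' {A X : C} (m : A ⊗ A ⟶ A) (f : X ⟶ A ⊗ A) :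
    R ((β_ A A).hom ≫ m) f ≫ (β_ A A).hom = (β_ X A).hom ≫ L m (f ≫ (β_ A A).hom) := by
  simp only [L, R, MonoidalCategory.whiskerLeft_comp, comp_whiskerRight, assoc]
  rw [← BraidedCategory.braiding_naturality_left_assoc, BraidedCategory.braiding_naturality_right,
    BraidedCategory.braiding_naturality_right_assoc, BraidedCategory.braiding_tensor_right_hom,
    BraidedCategory.braiding_tensor_left_hom]
  have y := BraidedCategory.yang_baxter A A A
  simp
  have yb : (β_ A A).hom ▷ A ≫ (α_ A A A).hom ≫ A ◁ (β_ A A).hom ≫ (α_ A A A).inv ≫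
      (β_ A A).hom ▷ A = (α_ A A A).hom ≫ A ◁ (β_ A A).hom ≫ (α_ A A A).inv ≫
      (β_ A A).hom ▷ A ≫ (α_ A A A).hom ≫ A ◁ (β_ A A).hom ≫ (α_ A A A).inv := by
    rw [← reassoc_of% y]; simp
  rw [reassoc_of% yb]

/-- First triangle: indices `1, 2, 3` (or `1, 4, 3`). -/
theorem tri1 {A : C} (m p : A ⊗ A ⟶ A) (hassoc : ml m ≫ m = (A ◁ m) ≫ m)
    (t₁ t₂ t₃ : A ⊗ A ⟶ A ⊗ A)
    (hL : ∀ {X : C} (f g : X ⟶ A ⊗ A), L p f = L p g → f = g)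
    (hR : ∀ {X : C} (f g : X ⟶ A ⊗ A), R m f = R m g → f = g)
    (hR' : ∀ {X : C} (f g : X ⟶ A ⊗ A),
      R ((β_ A A).hom ≫ m) f = R ((β_ A A).hom ≫ m) g → f = g) :
    let c12 := L p t₁ = (α_ A A A).inv ≫ R m t₂
    let c13 := R ((β_ A A).hom ≫ m) t₁ =
      ((α_ A A A).hom ≫ A ◁ (β_ A A).hom ≫ (α_ A A A).inv) ≫ R m t₃
    let c23 := L p t₃ = (α_ A A A).inv ≫ R ((β_ A A).hom ≫ m) t₂
    (c12 → c13 → c23) ∧ (c12 → c23 → c13) ∧ (c13 → c23 → c12) := by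
  intro c12 c13 c23
  -- the three composites
  have e1 : L p (R ((β_ A A).hom ≫ m) t₁) = (α_ A (A ⊗ A) A).inv ≫
      R ((β_ A A).hom ≫ m) (L p t₁) := LR _ _ _
  have e3 : L p (((α_ A A A).hom ≫ A ◁ (β_ A A).hom ≫ (α_ A A A).inv) ≫ R m t₃) =
      A ◁ ((α_ A A A).hom ≫ A ◁ (β_ A A).hom ≫ (α_ A A A).inv) ≫ (α_ A (A ⊗ A) A).inv ≫
      R m (L p t₃) := by rw [L_pre, LR]
  have e2 : (α_ A (A ⊗ A) A).inv ≫ R ((β_ A A).hom ≫ m) ((α_ A A A).inv ≫ R m t₂) =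
      A ◁ ((α_ A A A).hom ≫ A ◁ (β_ A A).hom ≫ (α_ A A A).inv) ≫ (α_ A (A ⊗ A) A).inv ≫
      R m ((α_ A A A).inv ≫ R ((β_ A A).hom ≫ m) t₂) := by
    rw [R_pre, R_pre, RR m hassoc]
    simp
  refine ⟨fun h12 h13 => hR _ _ ?_, fun h12 h23 => hL _ _ ?_, fun h13 h23 => hR' _ _ ?_⟩
  · rw [← cancel_epi (α_ A (A ⊗ A) A).inv,
      ← cancel_epi (A ◁ ((α_ A A A).hom ≫ A ◁ (β_ A A).hom ≫ (α_ A A A).inv)),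
      ← e2, ← e3, ← h13, ← h12, e1]
  · rw [e1, e3, h12, h23, e2]
  · rw [← cancel_epi (α_ A (A ⊗ A) A).inv, ← e1, e2, ← h23, ← e3, h13]

/-- Second triangle: indices `1, 2, 4` (or `3, 2, 4`). -/
theorem tri2 {A : C} (m q : A ⊗ A ⟶ A) (hassoc : ml m ≫ m = (A ◁ m) ≫ m)
    (t₁ t₂ t₄ : A ⊗ A ⟶ A ⊗ A)
    (hR : ∀ {X : C} (f g : X ⟶ A ⊗ A), R q f = R q g → f = g)
    (hL : ∀ {X : C} (f g : X ⟶ A ⊗ A), L m f = L m g → f = g)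
    (hL' : ∀ {X : C} (f g : X ⟶ A ⊗ A),
      L ((β_ A A).hom ≫ m) f = L ((β_ A A).hom ≫ m) g → f = g) :
    let c12 := L m t₁ = (α_ A A A).inv ≫ R q t₂
    let c14 := L ((β_ A A).hom ≫ m) t₁ = (α_ A A A).inv ≫ R q t₄
    let c24 := L ((β_ A A).hom ≫ m) t₂ = wl (β_ A A).hom ≫ L m t₄
    (c12 → c14 → c24) ∧ (c12 → c24 → c14) ∧ (c14 → c24 → c12) := by
  intro c12 c14 c24
  have e1 := LL m hassoc t₁
  have e2 : L ((β_ A A).hom ≫ m) ((α_ A A A).inv ≫ R q t₂) =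
      A ◁ (α_ A A A).inv ≫ (α_ A (A ⊗ A) A).inv ≫ R q (L ((β_ A A).hom ≫ m) t₂) := by
    rw [L_pre, LR]
  have e4 : (α_ A A (A ⊗ A)).inv ≫ (β_ A A).hom ▷ (A ⊗ A) ≫ (α_ A A (A ⊗ A)).hom ≫
        L m ((α_ A A A).inv ≫ R q t₄) =
      A ◁ (α_ A A A).inv ≫ (α_ A (A ⊗ A) A).inv ≫ R q (wl (β_ A A).hom ≫ L m t₄) := by
    rw [L_pre, LR, R_pre]
    simp [wl]
  refine ⟨fun h12 h14 => hR _ _ ?_, fun h12 h24 => hL _ _ ?_, fun h14 h24 => hL' _ _ ?_⟩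
  · rw [← cancel_epi (α_ A (A ⊗ A) A).inv, ← cancel_epi (A ◁ (α_ A A A).inv),
      ← e2, ← e4, ← h14, ← h12, e1]
  · rw [← cancel_epi (α_ A A (A ⊗ A)).hom, ← cancel_epi ((β_ A A).hom ▷ (A ⊗ A)),
      ← cancel_epi (α_ A A (A ⊗ A)).inv, ← e1, e4, ← h24, ← e2, h12]
  · rw [e1, e2, h24, ← e4, h14]

/-- Lemma 2.3: if, for distinct indices `i, j, k ∈ {1,2,3,4}`, the
compatibility relation involving `tᵢ` and `tⱼ` and the one involving `tᵢ` and `t_k`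
hold, then so does the one involving `tⱼ` and `t_k`. -/
theorem lemma_compatibility
    (A : C) (𝒴 : Set C) (hA : A ∈ 𝒴)
    (m : A ⊗ A ⟶ A)
    (hassoc : ml m ≫ m = (A ◁ m) ≫ m)
    (hndl : NdLeftOn m 𝒴) (hndr : NdRightOn m 𝒴)
    (t₁ t₂ t₃ t₄ : A ⊗ A ⟶ A ⊗ A) :
    ∀ i j k : ℕ, i ∈ ({1, 2, 3, 4} : Set ℕ) → j ∈ ({1, 2, 3, 4} : Set ℕ) →
      k ∈ ({1, 2, 3, 4} : Set ℕ) → i ≠ j → i ≠ k → j ≠ k →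
      compatRel m t₁ t₂ t₃ t₄ i j → compatRel m t₁ t₂ t₃ t₄ i k →
      compatRel m t₁ t₂ t₃ t₄ j k := by
  have hL : ∀ {X : C} (f g : X ⟶ A ⊗ A), L m f = L m g → f = g :=
    fun {X} f g h => hndl X A hA h
  have hL' : ∀ {X : C} (f g : X ⟶ A ⊗ A),
      L ((β_ A A).hom ≫ m) f = L ((β_ A A).hom ≫ m) g → f = g :=
    fun {X} f g h => hndr X A hA h
  have hR : ∀ {X : C} (f g : X ⟶ A ⊗ A), R m f = R m g → f = g := by
    intro X f g h
    have h2 : (β_ A X).hom ≫ R m f = (β_ A X).hom ≫ R m g := by rw [h]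
    rw [R_conj, R_conj, cancel_mono] at h2
    exact (cancel_mono _).1 (hL' _ _ h2)
  have hR' : ∀ {X : C} (f g : X ⟶ A ⊗ A),
      R ((β_ A A).hom ≫ m) f = R ((β_ A A).hom ≫ m) g → f = g := by
    intro X f g h
    have h2 := congrArg (fun k => k ≫ (β_ A A).hom) h
    simp only [R_conj', cancel_epi] at h2
    exact (cancel_mono _).1 (hL _ _ h2)
  have i12 : C12 m t₁ t₂ ↔ L m t₁ = (α_ A A A).inv ≫ R m t₂ := by
    simp [C12, L, R, wl, ml]
  have i13 : C13 m t₁ t₃ ↔ R ((β_ A A).hom ≫ m) t₁ =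
      ((α_ A A A).hom ≫ A ◁ (β_ A A).hom ≫ (α_ A A A).inv) ≫ R m t₃ := by
    rw [← cancel_epi (α_ A A A).inv]
    simp [C13, R, wl]
  have i14 : C14 m t₁ t₄ ↔ L ((β_ A A).hom ≫ m) t₁ = (α_ A A A).inv ≫ R m t₄ := by
    simp [C14, L, R, wl, ml]
  have i23 : C23 m t₂ t₃ ↔ L m t₃ = (α_ A A A).inv ≫ R ((β_ A A).hom ≫ m) t₂ := by
    rw [eq_comm]; simp [C23, L, R, wl, ml]
  have i24 : C24 m t₂ t₄ ↔ L ((β_ A A).hom ≫ m) t₂ = wl (β_ A A).hom ≫ L m t₄ := by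
    simp [C24, L, wl, ml]
  have i34 : C34 m t₃ t₄ ↔ L ((β_ A A).hom ≫ m) t₃ =
      (α_ A A A).inv ≫ R ((β_ A A).hom ≫ m) t₄ := by
    simp [C34, L, R, wl, ml]
  obtain ⟨a1, a2, a3⟩ := tri1 m m hassoc t₁ t₂ t₃ hL hR hR'
  obtain ⟨b1, b2, b3⟩ := tri1 m ((β_ A A).hom ≫ m) hassoc t₁ t₄ t₃ hL' hR hR'
  obtain ⟨c1, c2, c3⟩ := tri2 m m hassoc t₁ t₂ t₄ hR hL hL'
  obtain ⟨d1, d2, d3⟩ := tri2 m ((β_ A A).hom ≫ m) hassoc t₃ t₂ t₄ hR' hL hL'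
  rw [← i12, ← i13, ← i23] at a1 a2 a3
  rw [← i14, ← i13, ← i34] at b1 b2 b3
  rw [← i12, ← i14, ← i24] at c1 c2 c3
  rw [← i23, ← i34, ← i24] at d1 d2 d3
  intro i j k hi hj hk hij hik hjk
  simp only [Set.mem_insert_iff, Set.mem_singleton_iff] at hi hj hk
  rcases hi with rfl | rfl | rfl | rfl <;> rcases hj with rfl | rfl | rfl | rfl <;>
    rcases hk with rfl | rfl | rfl | rfl <;>
    first
    | exact absurd rfl hij
    | exact absurd rfl hik
    | exact absurd rfl hjk
    | (simp only [compatRel]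
       intro h hh
       with_reducible first
         | exact a1 h hh | exact a1 hh h | exact a2 h hh | exact a2 hh h
         | exact a3 h hh | exact a3 hh h | exact b1 h hh | exact b1 hh h
         | exact b2 h hh | exact b2 hh h | exact b3 h hh | exact b3 hh h
         | exact c1 h hh | exact c1 hh h | exact c2 h hh | exact c2 hh h
         | exact c3 h hh | exact c3 hh h | exact d1 h hh | exact d1 hh h
         | exact d2 h hh | exact d2 hh h | exact d3 h hh | exact d3 hh h)

end WeakMultiplierBimonoid
end

section
/- Let A be a semigroup in a braided monoidal category C whose multiplication m is non-degenerate with respect to some class of objects containing A, and let t₁, t₂, t₃, t₄ : A⊗A → A⊗A. Then the following are equivalent: (i) relations (c12), (c13) and (c14) hold; (ii) relations (c12), (c23) and (c24) hold; (iii) relations (c13), (c23) and (c34) hold; (iv) relations (c14), (c24) and (c34) hold. -/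
open CategoryTheory Category MonoidalCategory

universe v u

namespace WeakMultiplierBimonoid

variable {C : Type u} [Category.{v} C] [MonoidalCategory C] [BraidedCategory C]

/-- Multiply the first leg from the left. -/
def Lo {A X : C} (p : A ⊗ A ⟶ A) (f : X ⟶ A ⊗ A) : A ⊗ X ⟶ A ⊗ A :=
  (A ◁ f) ≫ (α_ A A A).inv ≫ (p ▷ A)

/-- Multiply the second leg from the right. -/
def Ro {A X : C} (q : A ⊗ A ⟶ A) (f : X ⟶ A ⊗ A) : X ⊗ A ⟶ A ⊗ A :=
  (f ▷ A) ≫ (α_ A A A).hom ≫ (A ◁ q)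

theorem Lo_comp {A X Y : C} (p : A ⊗ A ⟶ A) (h : Y ⟶ X) (f : X ⟶ A ⊗ A) :
    Lo p (h ≫ f) = A ◁ h ≫ Lo p f := by simp [Lo]

theorem Ro_comp {A X Y : C} (p : A ⊗ A ⟶ A) (h : Y ⟶ X) (f : X ⟶ A ⊗ A) :
    Ro p (h ≫ f) = h ▷ A ≫ Ro p f := by simp [Ro]

theorem Ro_Lo {A X : C} (p q : A ⊗ A ⟶ A) (f : X ⟶ A ⊗ A) :
    Ro q (Lo p f) = (α_ A X A).hom ≫ Lo p (Ro q f) := by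
  simp only [Lo, Ro, comp_whiskerRight, MonoidalCategory.whiskerLeft_comp, assoc]
  rw [associator_naturality_left_assoc, ← whisker_exchange]
  monoidal

theorem core_R {A : C} (m : A ⊗ A ⟶ A) (hassoc : ml m ≫ m = (A ◁ m) ≫ m) :
    m ▷ A ≫ (β_ A A).hom ≫ m =
      (α_ A A A).hom ≫ A ◁ (β_ A A).hom ≫ (α_ A A A).inv ≫ (β_ A A).hom ▷ A ≫ m ▷ A ≫ m := by
  have h : m ▷ A ≫ m = (α_ A A A).hom ≫ A ◁ m ≫ m := by
    rw [← hassoc]; simp [ml]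
  rw [h, BraidedCategory.braiding_naturality_left_assoc, BraidedCategory.braiding_tensor_left_hom]
  simp

theorem core_L {A : C} (m : A ⊗ A ⟶ A) (hassoc : ml m ≫ m = (A ◁ m) ≫ m) :
    A ◁ m ≫ (β_ A A).hom ≫ m =
      (α_ A A A).inv ≫ (β_ A A).hom ▷ A ≫ (α_ A A A).hom ≫ A ◁ (β_ A A).hom ≫ A ◁ m ≫ m := by
  rw [← hassoc, BraidedCategory.braiding_naturality_right_assoc,
    BraidedCategory.braiding_tensor_right_hom]
  simp [ml]

theorem Ro_Ro {A X : C} (m : A ⊗ A ⟶ A) (hassoc : ml m ≫ m = (A ◁ m) ≫ m)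
    (f : X ⟶ A ⊗ A) :
    Ro ((β_ A A).hom ≫ m) (Ro m f) =
      (α_ X A A).hom ≫ X ◁ (β_ A A).hom ≫ (α_ X A A).inv ≫ Ro m (Ro ((β_ A A).hom ≫ m) f) := by
  have c := congrArg (fun k => f ▷ A ▷ A ≫ (α_ (A ⊗ A) A A).hom ≫ (α_ A A (A ⊗ A)).hom ≫
    A ◁ (α_ A A A).inv ≫ A ◁ k) (core_R m hassoc)
  simp only [MonoidalCategory.whiskerLeft_comp] at c
  refine Eq.trans ?_ (c.trans ?_)
  · simp only [Ro, comp_whiskerRight, MonoidalCategory.whiskerLeft_comp, assoc]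
    monoidal
  · simp only [Ro, comp_whiskerRight, MonoidalCategory.whiskerLeft_comp, assoc]
    have e : f ▷ A ▷ A ≫ (α_ (A ⊗ A) A A).hom ≫ (A ⊗ A) ◁ (β_ A A).hom ≫ (α_ (A ⊗ A) A A).inv =
      (α_ X A A).hom ≫ X ◁ (β_ A A).hom ≫ (α_ X A A).inv ≫ f ▷ A ▷ A := by
      rw [← associator_inv_naturality_left, whisker_exchange_assoc]
      simp
    have e2 := fun {Z : C} (k : ((A ⊗ A) ⊗ A) ⊗ A ⟶ Z) => congrArg (fun z => z ≫ k) e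
    simp only [assoc] at e2
    rw [← e2]
    monoidal

theorem Lo_Lo {A X : C} (m : A ⊗ A ⟶ A) (hassoc : ml m ≫ m = (A ◁ m) ≫ m)
    (f : X ⟶ A ⊗ A) :
    Lo ((β_ A A).hom ≫ m) (Lo m f) =
      (α_ A A X).inv ≫ (β_ A A).hom ▷ X ≫ (α_ A A X).hom ≫ Lo m (Lo ((β_ A A).hom ≫ m) f) := by
  have c := congrArg (fun k => A ◁ A ◁ f ≫ (α_ A A (A ⊗ A)).inv ≫ (α_ (A ⊗ A) A A).inv ≫
    (α_ A A A).hom ▷ A ≫ k ▷ A) (core_L m hassoc)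
  simp only [comp_whiskerRight] at c
  refine Eq.trans ?_ (c.trans ?_)
  · simp only [Lo, comp_whiskerRight, MonoidalCategory.whiskerLeft_comp, assoc]
    monoidal
  · simp only [Lo, comp_whiskerRight, MonoidalCategory.whiskerLeft_comp, assoc]
    have e : A ◁ A ◁ f ≫ (α_ A A (A ⊗ A)).inv ≫ (β_ A A).hom ▷ (A ⊗ A) ≫ (α_ A A (A ⊗ A)).hom =
      (α_ A A X).inv ≫ (β_ A A).hom ▷ X ≫ (α_ A A X).hom ≫ A ◁ A ◁ f := by
      rw [← associator_naturality_right, ← whisker_exchange_assoc]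
      simp
    have e2 := fun {Z : C} (k : A ⊗ A ⊗ A ⊗ A ⟶ Z) => congrArg (fun z => z ≫ k) e
    simp only [assoc] at e2
    rw [← e2]
    monoidal

theorem Ro_inj_m {A : C} {𝒴 : Set C} (hA : A ∈ 𝒴) {m : A ⊗ A ⟶ A} (h : NdRightOn m 𝒴)
    {X : C} {f g : X ⟶ A ⊗ A} (e : Ro m f = Ro m g) : f = g := by
  have key : ∀ f : X ⟶ A ⊗ A, Lo ((β_ A A).hom ≫ m) (f ≫ (β_ A A).inv) =
      (β_ A X).hom ≫ Ro m f ≫ (β_ A A).inv := by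
    intro f
    simp only [Lo, Ro, comp_whiskerRight, MonoidalCategory.whiskerLeft_comp, assoc]
    rw [← BraidedCategory.braiding_naturality_right_assoc]
    have n : A ◁ m ≫ (β_ A A).inv = (β_ (A ⊗ A) A).inv ≫ m ▷ A := by
      simp
    rw [n, BraidedCategory.braiding_tensor_left_inv]
    simp only [assoc, Iso.hom_inv_id_assoc]
    rw [← BraidedCategory.braiding_naturality_right_assoc,
      BraidedCategory.braiding_tensor_right_hom]
    simp
  have := h X A hA (a₁ := f ≫ (β_ A A).inv) (a₂ := g ≫ (β_ A A).inv)
    ((key f).trans ((by rw [e]) : _ = _) |>.trans (key g).symm)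
  simpa using this

theorem Ro_inj_n {A : C} {𝒴 : Set C} (hA : A ∈ 𝒴) {m : A ⊗ A ⟶ A} (h : NdLeftOn m 𝒴)
    {X : C} {f g : X ⟶ A ⊗ A}
    (e : Ro ((β_ A A).hom ≫ m) f = Ro ((β_ A A).hom ≫ m) g) : f = g := by
  have key : ∀ f : X ⟶ A ⊗ A, Lo m (f ≫ (β_ A A).hom) =
      (β_ X A).inv ≫ Ro ((β_ A A).hom ≫ m) f ≫ (β_ A A).hom := by
    intro f
    simp only [Lo, Ro, comp_whiskerRight, MonoidalCategory.whiskerLeft_comp, assoc]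
    rw [BraidedCategory.braiding_naturality_right]
    have n : f ▷ A = (β_ X A).hom ≫ A ◁ f ≫ (β_ (A ⊗ A) A).inv := by
      rw [← BraidedCategory.braiding_naturality_left_assoc, Iso.hom_inv_id, comp_id]
    rw [n, BraidedCategory.braiding_tensor_left_inv, BraidedCategory.braiding_tensor_right_hom]
    simp
  have := h X A hA (a₁ := f ≫ (β_ A A).hom) (a₂ := g ≫ (β_ A A).hom)
    ((key f).trans ((by rw [e]) : _ = _) |>.trans (key g).symm)
  simpa using this

theorem c12_iff {A : C} (m : A ⊗ A ⟶ A) (t₁ t₂ : A ⊗ A ⟶ A ⊗ A) :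
    C12 m t₁ t₂ ↔ (α_ A A A).hom ≫ Lo m t₁ = Ro m t₂ := by
  rw [← Iso.eq_inv_comp]; simp [C12, Lo, Ro, wl, ml]

theorem c13_iff {A : C} (m : A ⊗ A ⟶ A) (t₁ t₃ : A ⊗ A ⟶ A ⊗ A) :
    C13 m t₁ t₃ ↔ Ro ((β_ A A).hom ≫ m) t₁ =
      (α_ A A A).hom ≫ A ◁ (β_ A A).hom ≫ (α_ A A A).inv ≫ Ro m t₃ := by
  rw [← Iso.inv_comp_eq]; simp [C13, Lo, Ro, wl, ml]

theorem c14_iff {A : C} (m : A ⊗ A ⟶ A) (t₁ t₄ : A ⊗ A ⟶ A ⊗ A) :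
    C14 m t₁ t₄ ↔ (α_ A A A).hom ≫ Lo ((β_ A A).hom ≫ m) t₁ = Ro m t₄ := by
  rw [← Iso.eq_inv_comp]; simp [C14, Lo, Ro, wl, ml]

theorem c23_iff {A : C} (m : A ⊗ A ⟶ A) (t₂ t₃ : A ⊗ A ⟶ A ⊗ A) :
    C23 m t₂ t₃ ↔ Ro ((β_ A A).hom ≫ m) t₂ = (α_ A A A).hom ≫ Lo m t₃ := by
  rw [← Iso.inv_comp_eq]; simp [C23, Lo, Ro, wl, ml]

theorem c24_iff {A : C} (m : A ⊗ A ⟶ A) (t₂ t₄ : A ⊗ A ⟶ A ⊗ A) :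
    C24 m t₂ t₄ ↔ Lo ((β_ A A).hom ≫ m) t₂ =
      (α_ A A A).inv ≫ (β_ A A).hom ▷ A ≫ (α_ A A A).hom ≫ Lo m t₄ := by
  simp [C24, Lo, Ro, wl, ml]

theorem c34_iff {A : C} (m : A ⊗ A ⟶ A) (t₃ t₄ : A ⊗ A ⟶ A ⊗ A) :
    C34 m t₃ t₄ ↔ (α_ A A A).hom ≫ Lo ((β_ A A).hom ≫ m) t₃ = Ro ((β_ A A).hom ≫ m) t₄ := by
  rw [← Iso.eq_inv_comp]; simp [C34, Lo, Ro, wl, ml]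

/-- Corollary 2.4: the four triples of compatibility relations are
equivalent. -/
theorem corollary_compatibility
    (A : C) (𝒴 : Set C) (hA : A ∈ 𝒴)
    (m : A ⊗ A ⟶ A)
    (hassoc : ml m ≫ m = (A ◁ m) ≫ m)
    (hndl : NdLeftOn m 𝒴) (hndr : NdRightOn m 𝒴)
    (t₁ t₂ t₃ t₄ : A ⊗ A ⟶ A ⊗ A) :
    [C12 m t₁ t₂ ∧ C13 m t₁ t₃ ∧ C14 m t₁ t₄,
     C12 m t₁ t₂ ∧ C23 m t₂ t₃ ∧ C24 m t₂ t₄,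
     C13 m t₁ t₃ ∧ C23 m t₂ t₃ ∧ C34 m t₃ t₄,
     C14 m t₁ t₄ ∧ C24 m t₂ t₄ ∧ C34 m t₃ t₄].TFAE := by
  simp only [c12_iff, c13_iff, c14_iff, c23_iff, c24_iff, c34_iff]
  set n := (β_ A A).hom ≫ m with hn
  have injLm : ∀ {X : C} {f g : X ⟶ A ⊗ A}, Lo m f = Lo m g → f = g :=
    fun {X f g} e => hndl X A hA e
  have injLn : ∀ {X : C} {f g : X ⟶ A ⊗ A}, Lo n f = Lo n g → f = g :=
    fun {X f g} e => hndr X A hA e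
  have injRm : ∀ {X : C} {f g : X ⟶ A ⊗ A}, Ro m f = Ro m g → f = g :=
    fun {X f g} e => Ro_inj_m hA hndr e
  have injRn : ∀ {X : C} {f g : X ⟶ A ⊗ A}, Ro n f = Ro n g → f = g :=
    fun {X f g} e => Ro_inj_n hA hndl e
  have RR : ∀ {X : C} (f : X ⟶ A ⊗ A), Ro n (Ro m f) = _ := fun f => Ro_Ro m hassoc f
  have LL : ∀ {X : C} (f : X ⟶ A ⊗ A), Lo n (Lo m f) = _ := fun f => Lo_Lo m hassoc f
  rw [← hn] at RR LL
  tfae_have 1 → 2 := by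
    rintro ⟨h12, h13, h14⟩
    refine ⟨h12, ?_, ?_⟩
    · apply injRm
      have E := RR t₂
      simp only [← h12, Ro_comp, Ro_Lo, h13, Lo_comp] at E
      simp only [Ro_comp, Ro_Lo]
      rw [← cancel_epi ((α_ (A ⊗ A) A A).hom ≫ (A ⊗ A) ◁ (β_ A A).hom ≫ (α_ (A ⊗ A) A A).inv)]
      simp only [assoc]
      rw [← E]
      monoidal
    · apply injRm
      have h14aux := (Iso.eq_inv_comp _).2 h14
      simp only [Ro_comp, Ro_Lo, ← h12, Lo_comp, LL, h14aux]
      monoidal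
  tfae_have 2 → 3 := by
    rintro ⟨h12, h23, h24⟩
    refine ⟨?_, h23, ?_⟩
    · apply injLm
      have h12aux := (Iso.eq_inv_comp _).2 h12
      have E := (Iso.inv_comp_eq _).2 (Ro_Lo m n t₁)
      rw [← E]
      simp only [Ro_comp, Ro_Lo, h12aux, RR, h23, Lo_comp]
      monoidal
    · apply injLm
      have h23aux := (Iso.inv_comp_eq _).2 h23
      have E := LL t₃
      have Eaux := (Iso.inv_comp_eq _).2 (Ro_Lo n n t₂)
      rw [← h23aux, Lo_comp, ← Eaux, h24] at E
      simp only [Ro_comp, Ro_Lo] at E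
      simp only [Lo_comp]
      rw [← cancel_epi (A ◁ (α_ A A A).inv),
        ← cancel_epi ((α_ A A (A ⊗ A)).inv ≫ (β_ A A).hom ▷ (A ⊗ A) ≫ (α_ A A (A ⊗ A)).hom)]
      simp only [assoc, whiskerLeft_inv_hom_assoc]
      rw [← E]
      monoidal
  tfae_have 3 → 4 := by
    rintro ⟨h13, h23, h34⟩
    refine ⟨?_, ?_, h34⟩
    · apply injRn
      have h34aux := (Iso.eq_inv_comp _).2 h34
      have E := (Iso.inv_comp_eq _).2 (Ro_Lo n m t₃)
      simp only [Ro_comp, Ro_Lo, h13, Lo_comp, ← E, h34aux, RR]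
      monoidal
    · apply injRn
      have h34aux := (Iso.eq_inv_comp _).2 h34
      simp only [Ro_comp, Ro_Lo, h23, Lo_comp, LL, h34aux]
      monoidal
  tfae_have 4 → 1 := by
    rintro ⟨h14, h24, h34⟩
    refine ⟨?_, ?_, h14⟩
    · apply injLn
      have h14aux := (Iso.eq_inv_comp _).2 h14
      have E := (Iso.inv_comp_eq _).2 (Ro_Lo n m t₂)
      rw [← E]
      simp only [Lo_comp, LL, h14aux, h24, Ro_comp, Ro_Lo]
      monoidal
    · apply injLn
      have h14aux := (Iso.eq_inv_comp _).2 h14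
      have E := (Iso.inv_comp_eq _).2 (Ro_Lo n n t₁)
      rw [← E]
      simp only [Lo_comp, h14aux, Ro_comp, RR, ← h34, Ro_Lo]
      monoidal
  tfae_finish

end WeakMultiplierBimonoid
end

section
/- Let C be a braided monoidal category in which coequalizers exist and are preserved by taking the monoidal product with any object, and in which composites of regular epimorphisms are regular epimorphisms. Let (A, t₁,t₂,t₃,t₄,e₁,e₂,j) be a regular weak multiplier bimonoid in C whose multiplication m = (j⊗1)∘t₁ is a regular epimorphism and non-degenerate with respect to a class 𝒴 containing I, A, A⊗A and the base object L, and assume n₁ : L⊗A → A is non-degenerate on the right with respect to 𝒴. Then: (1) there is an associative multiplication μ : L⊗L → L, uniquely determined by μ∘(1⊗p) = p∘n₁, with respect to which n₁ is an associative action, i.e. n₁∘(μ⊗1) = n₁∘(1⊗n₁); (2) there is a coassociative comultiplication δ : L → L⊗L uniquely determined by δ∘p∘m = (p⊗p)∘t₁; (3) μ∘δ = 1_L; (4) δ is a morphism of L-bimodules: (μ⊗1)∘(1⊗δ) = δ∘μ = (1⊗μ)∘(δ⊗1); (5) δ admits a counit ε : L → I satisfying ε∘p = j, i.e. (ε⊗1)∘δ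 = 1_L = (1⊗ε)∘δ. In particular, (L, δ, ε) is a coseparable comonoid with bicomodule retraction μ of δ. -/
open CategoryTheory Category MonoidalCategory Limits

universe v u

namespace WeakMultiplierBimonoid

variable {C : Type u} [Category.{v} C] [MonoidalCategory C] [BraidedCategory C]

/-- The "middle braiding" `1 ⊗ c ⊗ 1 : A⁴ ⟶ A⁴` on `(A ⊗ A) ⊗ (A ⊗ A)`. -/
def midSw (A : C) : (A ⊗ A) ⊗ (A ⊗ A) ⟶ (A ⊗ A) ⊗ (A ⊗ A) :=
  (α_ A A (A ⊗ A)).hom ≫ (A ◁ (α_ A A A).inv) ≫ (A ◁ ((β_ A A).hom ▷ A)) ≫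
    (A ◁ (α_ A A A).hom) ≫ (α_ A A (A ⊗ A)).inv

/-- A regular weak multiplier bimonoid on an object `A` of a braided monoidal category,
with multiplication non-degenerate with respect to the class `𝒴`
(Definition 2.9 of the paper). -/
structure RWMB (A : C) (𝒴 : Set C) where
  t₁ : A ⊗ A ⟶ A ⊗ A
  t₂ : A ⊗ A ⟶ A ⊗ A
  t₃ : A ⊗ A ⟶ A ⊗ A
  t₄ : A ⊗ A ⟶ A ⊗ A
  e₁ : A ⊗ A ⟶ A ⊗ A
  e₂ : A ⊗ A ⟶ A ⊗ A
  j : A ⟶ 𝟙_ C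
  /-- the induced multiplication -/
  m : A ⊗ A ⟶ A
  /-- counit condition (m1); in particular `m` is the induced multiplication -/
  hm₁ : m = t₁ ≫ (j ▷ A) ≫ (λ_ A).hom
  /-- counit condition (m2) -/
  hm₂ : m = t₂ ≫ (A ◁ j) ≫ (ρ_ A).hom
  /-- counit condition (m3) -/
  hm₃ : m = (β_ A A).hom ≫ t₃ ≫ (j ▷ A) ≫ (λ_ A).hom
  /-- counit condition (m4) -/
  hm₄ : m = (β_ A A).hom ≫ t₄ ≫ (A ◁ j) ≫ (ρ_ A).hom
  /-- the class `𝒴` contains the monoidal unit -/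
  memI : (𝟙_ C) ∈ 𝒴
  memA : A ∈ 𝒴
  memAA : (A ⊗ A) ∈ 𝒴
  /-- `m` is non-degenerate on the left with respect to `𝒴` -/
  ndl : NdLeftOn m 𝒴
  /-- `m` is non-degenerate on the right with respect to `𝒴` -/
  ndr : NdRightOn m 𝒴
  /-- relation (c12) -/
  hc12 : (A ◁ t₁) ≫ ml m = wl t₂ ≫ (A ◁ m)
  /-- relation (c13) -/
  hc13 : wl t₁ ≫ (A ◁ (β_ A A).hom) ≫ (A ◁ m)
    = (A ◁ (β_ A A).hom) ≫ wl t₃ ≫ (A ◁ m)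
  /-- relation (c14) -/
  hc14 : (A ◁ t₁) ≫ wl (β_ A A).hom ≫ ml m = wl t₄ ≫ (A ◁ m)
  /-- relation (c23) -/
  hc23 : wl t₂ ≫ (A ◁ (β_ A A).hom) ≫ (A ◁ m) = (A ◁ t₃) ≫ ml m
  /-- relation (c24) -/
  hc24 : (A ◁ t₂) ≫ wl (β_ A A).hom ≫ ml m = wl (β_ A A).hom ≫ (A ◁ t₄) ≫ ml m
  /-- relation (c34) -/
  hc34 : (A ◁ t₃) ≫ wl (β_ A A).hom ≫ ml m = wl t₄ ≫ (A ◁ (β_ A A).hom) ≫ (A ◁ m)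
  /-- interchange relation for `(t₂, t₁)` -/
  hi21 : (A ◁ t₁) ≫ wl t₂ = wl t₂ ≫ (A ◁ t₁)
  /-- interchange relation for `(t₄, t₁)` -/
  hi41 : (A ◁ t₁) ≫ wl t₄ = wl t₄ ≫ (A ◁ t₁)
  /-- interchange relation for `(t₂, t₃)` -/
  hi23 : (A ◁ t₃) ≫ wl t₂ = wl t₂ ≫ (A ◁ t₃)
  /-- interchange relation for `(t₄, t₃)` -/
  hi43 : (A ◁ t₃) ≫ wl t₄ = wl t₄ ≫ (A ◁ t₃)
  /-- compatibility of the idempotents `e₁`, `e₂`: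
  `(m ⊗ m) ∘ (1 ⊗ c ⊗ 1) ∘ (1 ⊗ 1 ⊗ e₁) = (m ⊗ m) ∘ (1 ⊗ c ⊗ 1) ∘ (e₂ ⊗ 1 ⊗ 1)` -/
  hecomp : ((A ⊗ A) ◁ e₁) ≫ midSw A ≫ (m ▷ (A ⊗ A)) ≫ (A ◁ m)
    = (e₂ ▷ (A ⊗ A)) ≫ midSw A ≫ (m ▷ (A ⊗ A)) ≫ (A ◁ m)
  /-- Axiom I for the weakly counital fusion morphism `(t₁, e₁, j)` -/
  ax1 : (A ◁ t₁) ≫ wl (β_ A A).hom ≫ (A ◁ t₁) ≫ wl (β_ A A).inv ≫ wl t₁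
    = wl t₁ ≫ (A ◁ t₁)
  /-- Axiom II -/
  ax2 : e₁ ≫ e₁ = e₁
  /-- Axiom III -/
  ax3 : t₁ ≫ e₁ = t₁
  /-- Axiom IV -/
  ax4 : (A ◁ e₁) ≫ (A ◁ (β_ A A).inv) ≫ wl t₁ ≫ (A ◁ (β_ A A).hom) ≫ ml m
    = (A ◁ (β_ A A).inv) ≫ wl t₁ ≫ (A ◁ (β_ A A).hom) ≫ ml m
  /-- Axiom V -/
  ax5 : (A ◁ t₁) ≫ wl e₁ = wl e₁ ≫ (A ◁ t₁)
  /-- Axiom VI -/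
  ax6 : wl t₁ ≫ (A ◁ e₁)
    = (A ◁ (β_ A A).inv) ≫ wl e₁ ≫ (A ◁ (β_ A A).hom) ≫ wl t₁
  /-- Axiom VII -/
  ax7 : wl t₁ ≫ (A ◁ ((j ▷ A) ≫ (λ_ A).hom)) ≫ m
    = (A ◁ (β_ A A).hom) ≫ (A ◁ e₁) ≫ (A ◁ ((A ◁ j) ≫ (ρ_ A).hom)) ≫ m
  /-- Axiom VIII -/
  ax8 : wl t₁ ≫ (A ◁ (β_ A A).hom) ≫ ml m ≫ (j ▷ A) ≫ (λ_ A).hom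
    = (A ◁ (β_ A A).hom) ≫ (A ◁ e₁) ≫ (A ◁ ((j ▷ A) ≫ (λ_ A).hom)) ≫ m

namespace RWMB

variable {A : C} {𝒴 : Set C} (S : RWMB A 𝒴)

/-- `⊓ᴸ₁ := (j ⊗ 1) ∘ e₁`. -/
def piL1 : A ⊗ A ⟶ A := S.e₁ ≫ (S.j ▷ A) ≫ (λ_ A).hom

/-- `⊓ᴸ₂ := (j ⊗ 1) ∘ t₄ ∘ c`. -/
def piL2 : A ⊗ A ⟶ A := (β_ A A).hom ≫ S.t₄ ≫ (S.j ▷ A) ≫ (λ_ A).hom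

/-- `⊓̄ᴿ₁ ∘ c⁻¹ = (1 ⊗ j) ∘ e₁`, the second leg of the coequalizer defining the base
object. -/
def piBarR1c : A ⊗ A ⟶ A := S.e₁ ≫ (A ◁ S.j) ≫ (ρ_ A).hom

end RWMB



section Tails

set_option linter.unusedSectionVars false
set_option linter.unusedSimpArgs false

def T22 {X Y U V : C} (f : X ⊗ Y ⟶ U ⊗ V) (Z : C) : X ⊗ (Y ⊗ Z) ⟶ U ⊗ (V ⊗ Z) :=
  (α_ X Y Z).inv ≫ (f ▷ Z) ≫ (α_ U V Z).hom

def T21 {X Y U : C} (f : X ⊗ Y ⟶ U) (Z : C) : X ⊗ (Y ⊗ Z) ⟶ U ⊗ Z :=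
  (α_ X Y Z).inv ≫ (f ▷ Z)

def T10 {X : C} (f : X ⟶ 𝟙_ C) (Z : C) : X ⊗ Z ⟶ Z := (f ▷ Z) ≫ (λ_ Z).hom

def R10 {Y : C} (f : Y ⟶ 𝟙_ C) (X : C) : X ⊗ Y ⟶ X := (X ◁ f) ≫ (ρ_ X).hom

variable {X Y U V W Z Z' : C}

lemma T22_nat (f : X ⊗ Y ⟶ U ⊗ V) (g : Z ⟶ Z') :
    T22 f Z ≫ U ◁ V ◁ g = X ◁ Y ◁ g ≫ T22 f Z' := by
  simp only [T22, assoc]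
  rw [← associator_naturality_right, ← whisker_exchange_assoc,
    associator_inv_naturality_right_assoc]

lemma T21_nat (f : X ⊗ Y ⟶ U) (g : Z ⟶ Z') :
    T21 f Z ≫ U ◁ g = X ◁ Y ◁ g ≫ T21 f Z' := by
  simp only [T21, assoc]
  rw [← whisker_exchange, associator_inv_naturality_right_assoc]

lemma T10_nat (f : X ⟶ 𝟙_ C) (g : Z ⟶ Z') :
    T10 f Z ≫ g = X ◁ g ≫ T10 f Z' := by
  simp only [T10, assoc]
  rw [whisker_exchange_assoc, leftUnitor_naturality]

lemma T22_comp {P Q : C} (f : X ⊗ Y ⟶ U ⊗ V) (g : U ⊗ V ⟶ P ⊗ Q) (Z : C) :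
    T22 (f ≫ g) Z = T22 f Z ≫ T22 g Z := by simp [T22]

lemma T21_comp (f : X ⊗ Y ⟶ U ⊗ V) (g : U ⊗ V ⟶ W) (Z : C) :
    T21 (f ≫ g) Z = T22 f Z ≫ T21 g Z := by simp [T22, T21]

lemma T21_T10 (f : X ⊗ Y ⟶ U ⊗ V) (j : U ⟶ 𝟙_ C) (Z : C) :
    T21 (f ≫ T10 j V) Z = T22 f Z ≫ T10 j (V ⊗ Z) := by
  simp only [T22, T21, T10]; monoidal

lemma T21_R10 (f : X ⊗ Y ⟶ U ⊗ V) (j : V ⟶ 𝟙_ C) (Z : C) :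
    T21 (f ≫ R10 j U) Z = T22 f Z ≫ U ◁ T10 j Z := by
  simp only [T22, T21, T10, R10]; monoidal

lemma R10_T10 (j : X ⟶ 𝟙_ C) (k : Y ⟶ 𝟙_ C) :
    R10 k X ≫ j = T10 j Y ≫ k := by
  rw [T10_nat, R10, T10, assoc, ← rightUnitor_naturality, unitors_equal,
    whisker_exchange_assoc]

lemma R10_nat (k : Y ⟶ 𝟙_ C) (f : X ⟶ Z) :
    R10 k X ≫ f = f ▷ Y ≫ R10 k Z := by
  simp only [R10, assoc, ← rightUnitor_naturality, whisker_exchange_assoc]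

lemma T21_whisker (f : X ⊗ Y ⟶ U) (j : V ⟶ 𝟙_ C) :
    T21 f V ≫ R10 j U = X ◁ R10 j Y ≫ f := by
  simp only [T21, R10]; 
  rw [assoc, ← whisker_exchange_assoc, rightUnitor_naturality]
  simp

lemma R10_R10 (j : U ⟶ 𝟙_ C) (k : Y ⟶ 𝟙_ C) :
    X ◁ R10 j Y ≫ R10 k X = R10 (R10 j Y ≫ k) X := by
  simp [R10]

lemma whisker_R10 (f : Z ⟶ Y) (k : Y ⟶ 𝟙_ C) :
    X ◁ f ≫ R10 k X = R10 (f ≫ k) X := by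
  simp [R10]

lemma T22_braid_inv (X Y Z : C) : T22 (β_ X Y).hom Z ≫ T22 (β_ X Y).inv Z = 𝟙 _ := by
  simp [T22]

lemma T22_inv_braid (X Y Z : C) : T22 (β_ X Y).inv Z ≫ T22 (β_ X Y).hom Z = 𝟙 _ := by
  simp [T22]

lemma braid_inv_R10 {A : C} (j : A ⟶ 𝟙_ C) (X : C) :
    (β_ X A).inv ≫ R10 j X = T10 j X := by
  rw [R10, T10, ← BraidedCategory.braiding_inv_naturality_left_assoc]; simp

lemma braid_inv_T10 {A : C} (j : A ⟶ 𝟙_ C) (X : C) :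
    (β_ A X).inv ≫ T10 j X = R10 j X := by
  rw [R10, T10, ← BraidedCategory.braiding_inv_naturality_right_assoc]; simp

lemma N1 {A B : C} (f : X ⊗ Y ⟶ B) :
    X ◁ (β_ A Y).hom ≫ T21 f A ≫ (β_ A B).inv = T22 (β_ A X).inv Y ≫ A ◁ f := by
  simp [T21, T22]

lemma N2 {A : C} (f : X ⊗ Y ⟶ U ⊗ V) :
    X ◁ (β_ Y A).hom ≫ T22 (β_ X A).hom Y ≫ A ◁ f
      = T22 f A ≫ U ◁ (β_ V A).hom ≫ T22 (β_ U A).hom V := by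
  have h := (α_ X Y A).inv ≫= (BraidedCategory.braiding_naturality_left f A)
  simpa [T22] using h.symm

lemma N3 {A : C} (f : X ⊗ Y ⟶ U ⊗ V) :
    T22 (β_ X A).inv Y ≫ X ◁ (β_ Y A).inv ≫ T22 f A
      = A ◁ f ≫ T22 (β_ U A).inv V ≫ U ◁ (β_ V A).inv := by
  have h := (T22 (β_ X A).inv Y ≫ X ◁ (β_ Y A).inv) ≫= N2 (A := A) f =≫
    (T22 (β_ U A).inv V ≫ U ◁ (β_ V A).inv)
  have e1 : ∀ {P : C} (g : _ ⟶ P), X ◁ (β_ Y A).inv ≫ X ◁ (β_ Y A).hom ≫ g = g := by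
    intro P g; simp
  have e2 : U ◁ (β_ V A).hom ≫ U ◁ (β_ V A).inv = 𝟙 _ := by simp
  simp only [assoc, e1, reassoc_of% (T22_inv_braid X A Y), reassoc_of% (T22_braid_inv U A V), e2,
    comp_id] at h
  exact h.symm

lemma YBinv (A : C) : T22 (β_ A A).inv A ≫ A ◁ (β_ A A).inv ≫ T22 (β_ A A).inv A
    = A ◁ (β_ A A).inv ≫ T22 (β_ A A).inv A ≫ A ◁ (β_ A A).inv := by
  have h := (congrArg Iso.inv (BraidedCategory.yang_baxter_iso A A A))
  simpa [T22] using h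

def K3 (X Y W Z : C) : X ⊗ (Y ⊗ (W ⊗ Z)) ⟶ (X ⊗ (Y ⊗ W)) ⊗ Z :=
  X ◁ (α_ Y W Z).inv ≫ (α_ X (Y ⊗ W) Z).inv

variable {P : C}

lemma K3_a (f : Y ⊗ W ⟶ U) (g : (X ⊗ U) ⊗ Z ⟶ P) :
    K3 X Y W Z ≫ (X ◁ f) ▷ Z ≫ g = X ◁ T21 f Z ≫ (α_ X U Z).inv ≫ g := by
  simp [K3, T21]

lemma K3_b (f : Y ⊗ W ⟶ U ⊗ V) (g : (X ⊗ (U ⊗ V)) ⊗ Z ⟶ P) :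
    K3 X Y W Z ≫ (X ◁ f) ▷ Z ≫ g = X ◁ T22 f Z ≫ K3 X U V Z ≫ g := by
  simp [K3, T22]

lemma K3_c (f : X ⊗ Y ⟶ U) (g : (U ⊗ W) ⊗ Z ⟶ P) :
    K3 X Y W Z ≫ (T21 f W) ▷ Z ≫ g = T21 f (W ⊗ Z) ≫ (α_ U W Z).inv ≫ g := by
  have : K3 X Y W Z ≫ (T21 f W) ▷ Z = T21 f (W ⊗ Z) ≫ (α_ U W Z).inv := by
    simp only [K3, T21]; monoidal
  rw [reassoc_of% this]

lemma K3_d (f : X ⊗ Y ⟶ U ⊗ V) (g : (U ⊗ (V ⊗ W)) ⊗ Z ⟶ P) :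
    K3 X Y W Z ≫ (T22 f W) ▷ Z ≫ g = T22 f (W ⊗ Z) ≫ K3 U V W Z ≫ g := by
  have : K3 X Y W Z ≫ (T22 f W) ▷ Z = T22 f (W ⊗ Z) ≫ K3 U V W Z := by
    simp only [K3, T22]; monoidal
  rw [reassoc_of% this]

lemma K3_e (f : X ⊗ Y ⟶ U) (g : U ⊗ Z ⟶ P) :
    (α_ X Y Z).inv ≫ f ▷ Z ≫ g = T21 f Z ≫ g := by
  simp [T21]

lemma K3_f (f : X ⟶ 𝟙_ C) (g : Y ⊗ Z ⟶ P) :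
    (α_ X Y Z).inv ≫ (T10 f Y) ▷ Z ≫ g = T10 f (Y ⊗ Z) ≫ g := by
  simp [T10]

lemma K3_g (f : Y ⟶ 𝟙_ C) (g : X ⊗ Z ⟶ P) :
    (α_ X Y Z).inv ≫ (R10 f X) ▷ Z ≫ g = X ◁ T10 f Z ≫ g := by
  simp [T10, R10]

lemma K3_h (f : X ⟶ 𝟙_ C) (g : Z ⟶ P) :
    f ▷ Z ≫ (λ_ Z).hom ≫ g = T10 f Z ≫ g := by
  simp [T10]

lemma K3_end (X Y W Z : C) {g h : (X ⊗ (Y ⊗ W)) ⟶ P} (e : g = h) :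
    K3 X Y W Z ≫ g ▷ Z ≫ 𝟙 _ = K3 X Y W Z ≫ h ▷ Z ≫ 𝟙 _ := by rw [e]

lemma K3_endB (X Y W Z : C) {g h : (X ⊗ (Y ⊗ W)) ⟶ 𝟙_ C} (e : g = h) :
    K3 X Y W Z ≫ g ▷ Z ≫ (λ_ Z).hom ≫ 𝟙 _ = K3 X Y W Z ≫ h ▷ Z ≫ (λ_ Z).hom ≫ 𝟙 _ := by rw [e]

lemma K3_endC (X Y W Z : C) {g h : (X ⊗ (Y ⊗ W)) ⟶ U ⊗ V} (e : g = h) :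
    K3 X Y W Z ≫ g ▷ Z ≫ (α_ U V Z).hom = K3 X Y W Z ≫ h ▷ Z ≫ (α_ U V Z).hom := by rw [e]

lemma K3_end3 (X Y W Z : C) {P Q R : C} {g h : (X ⊗ (Y ⊗ W)) ⟶ P ⊗ (Q ⊗ R)} (e : g = h) :
    K3 X Y W Z ≫ g ▷ Z ≫ (α_ P (Q ⊗ R) Z).hom ≫ P ◁ (α_ Q R Z).hom
     = K3 X Y W Z ≫ h ▷ Z ≫ (α_ P (Q ⊗ R) Z).hom ≫ P ◁ (α_ Q R Z).hom := by rw [e]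

lemma K3_inv (X Y W Z : C) :
    K3 X Y W Z ≫ (α_ X (Y ⊗ W) Z).hom ≫ X ◁ (α_ Y W Z).hom = 𝟙 _ := by
  simp [K3]

lemma T21_T10b (f : X ⟶ 𝟙_ C) : T21 (T10 f Y) Z = T10 f (Y ⊗ Z) := by
  simp [T10, T21]

lemma T21_R10b (f : Y ⟶ 𝟙_ C) : T21 (R10 f X) Z = X ◁ T10 f Z := by
  simp [T10, R10, T21]

instance (X Y W Z : C) : IsIso (K3 X Y W Z) := by
  unfold K3; infer_instance

lemma K3_cancel (X Y W Z : C) {g h : (X ⊗ (Y ⊗ W)) ⊗ Z ⟶ P} (e : K3 X Y W Z ≫ g = K3 X Y W Z ≫ h) :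
    g = h := by
  rw [← cancel_epi (K3 X Y W Z)]
  exact e

lemma ndl0 {𝒴 : Set C} (hI : 𝟙_ C ∈ 𝒴) {v : Z ⊗ V ⟶ W} (hv : NdLeftOn v 𝒴) {g h : X ⟶ V}
    (e : Z ◁ g ≫ v = Z ◁ h ≫ v) : g = h := by
  have key : ∀ k : X ⟶ V, Z ◁ (k ≫ (ρ_ V).inv) ≫ (α_ Z V (𝟙_ C)).inv ≫ v ▷ (𝟙_ C)
      = Z ◁ k ≫ v ≫ (ρ_ W).inv := by
    intro k
    simp
  have := hv X (𝟙_ C) hI (a₁ := g ≫ (ρ_ V).inv) (a₂ := h ≫ (ρ_ V).inv) (by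
    simp only [key]; rw [reassoc_of% e])
  simpa using this

lemma ndr0 {𝒴 : Set C} (hI : 𝟙_ C ∈ 𝒴) {v : Z ⊗ V ⟶ W} (hv : NdRightOn v 𝒴) {g h : X ⟶ Z}
    (e : g ▷ V ≫ v = h ▷ V ≫ v) : g = h := by
  refine ndl0 hI hv ?_
  rw [BraidedCategory.braiding_naturality_right_assoc,
    BraidedCategory.braiding_naturality_right_assoc, e]

lemma T21_braid {A B : C} (f : X ⊗ Y ⟶ B) :
    T21 f A ≫ (β_ B A).hom = X ◁ (β_ Y A).hom ≫ T22 (β_ X A).hom Y ≫ A ◁ f := by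
  simp [T21, T22]

lemma whisker_braid {A B : C} (f : X ⊗ Y ⟶ B) :
    A ◁ f ≫ (β_ A B).hom = T22 (β_ A X).hom Y ≫ X ◁ (β_ A Y).hom ≫ T21 f A := by
  simp [T21, T22]

lemma YB (A : C) : T22 (β_ A A).hom A ≫ A ◁ (β_ A A).hom ≫ T22 (β_ A A).hom A
    = A ◁ (β_ A A).hom ≫ T22 (β_ A A).hom A ≫ A ◁ (β_ A A).hom := by
  have h := (congrArg Iso.hom (BraidedCategory.yang_baxter_iso A A A))
  simpa [T22] using h

end Tails

namespace RWMB
section Lem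
set_option linter.unusedSectionVars false
set_option linter.unusedSimpArgs false
variable {A : C} {𝒴 : Set C} (S : RWMB A 𝒴)

def tau : A ⊗ A ⟶ A ⊗ A := S.t₁ ≫ (β_ A A).inv
def rR : A ⊗ A ⟶ A := S.t₁ ≫ R10 S.j A
def pp : A ⊗ A ⟶ A := (β_ A A).hom ≫ S.piL1
def lR : A ⊗ A ⟶ A := (β_ A A).hom ≫ S.piBarR1c
def ss : A ⊗ A ⟶ A := S.t₂ ≫ T10 S.j A

lemma m_t : S.m = S.t₁ ≫ T10 S.j A := S.hm₁
lemma m_tT (Z : C) : T21 S.m Z = T22 S.t₁ Z ≫ T10 S.j (A ⊗ Z) := by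
  rw [m_t, T21_T10]
lemma m_tau : S.m = S.tau ≫ R10 S.j A := by
  rw [tau, assoc, braid_inv_R10, ← m_t]
lemma m_tauT (Z : C) : T21 S.m Z = T22 S.tau Z ≫ A ◁ T10 S.j Z := by
  rw [m_tau, T21_R10]
lemma rR_T (Z : C) : T21 S.rR Z = T22 S.t₁ Z ≫ A ◁ T10 S.j Z := by
  rw [rR, T21_R10]
lemma rR_tau : S.rR = S.tau ≫ T10 S.j A := by
  rw [tau, assoc, braid_inv_T10, ← rR]
lemma rR_tauT (Z : C) : T21 S.rR Z = T22 S.tau Z ≫ T10 S.j (A ⊗ Z) := by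
  rw [rR_tau, T21_T10]
lemma piL1_eq : S.piL1 = S.e₁ ≫ T10 S.j A := rfl
lemma kap_eq : S.piBarR1c = S.e₁ ≫ R10 S.j A := rfl
lemma piL1_T (Z : C) : T21 S.piL1 Z = T22 S.e₁ Z ≫ T10 S.j (A ⊗ Z) := by
  rw [piL1_eq, T21_T10]
lemma kap_T (Z : C) : T21 S.piBarR1c Z = T22 S.e₁ Z ≫ A ◁ T10 S.j Z := by
  rw [kap_eq, T21_R10]
lemma t_piL1 : S.t₁ ≫ S.piL1 = S.m := by
  rw [piL1_eq, reassoc_of% S.ax3, ← m_t]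
lemma t_kap : S.t₁ ≫ S.piBarR1c = S.rR := by
  rw [kap_eq, reassoc_of% S.ax3, ← rR]
lemma tau_pp : S.tau ≫ S.pp = S.m := by
  rw [tau, pp, assoc, Iso.inv_hom_id_assoc, t_piL1]

lemma VIII0 : A ◁ S.pp ≫ S.m = T22 S.t₁ A ≫ A ◁ (β_ A A).hom ≫ T21 S.m A ≫ T10 S.j A := by
  have := S.ax8
  simp only [ml, wl, assoc] at this
  simp only [pp, piL1, T22, T21, T10, assoc, whiskerLeft_comp] at this ⊢
  exact this.symm

lemma VIII : A ◁ S.pp ≫ S.m = T22 S.tau A ≫ A ◁ S.m ≫ R10 S.j A := by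
  rw [VIII0, tau, T22_comp, assoc]
  have := N1 (A := A) S.m =≫ R10 S.j A
  rw [assoc, assoc, braid_inv_R10] at this
  rw [this, assoc]

lemma VII : T21 S.rR A ≫ S.m = A ◁ S.lR ≫ S.m := by
  have := S.ax7
  simp only [wl, assoc] at this
  rw [rR_T]
  simp only [lR, piBarR1c, T22, T10, assoc, whiskerLeft_comp] at this ⊢
  exact this

lemma C0pp : A ◁ S.pp ≫ S.m ≫ S.j = A ◁ S.lR ≫ S.m ≫ S.j := by
  rw [reassoc_of% S.VIII, ← reassoc_of% S.VII, rR_tauT, assoc, ← R10_T10, ← whisker_R10, assoc]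

lemma C0 : A ◁ S.piL1 ≫ S.m ≫ S.j = A ◁ S.piBarR1c ≫ S.m ≫ S.j := by
  have := (A ◁ (β_ A A).inv) ≫= S.C0pp
  simpa [pp, lR] using this

lemma C0T (Z : C) : A ◁ T21 S.piL1 Z ≫ T21 S.m Z ≫ T10 S.j Z
    = A ◁ T21 S.piBarR1c Z ≫ T21 S.m Z ≫ T10 S.j Z := by
  have := K3_endB A A A Z S.C0
  simp only [comp_whiskerRight, assoc, K3_b, K3_a, K3_d, K3_c, K3_f, K3_e, K3_g, K3_h] at this
  simpa only [comp_id] using this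

lemma C1T (Z : C) : A ◁ T21 S.m Z ≫ T21 S.m Z ≫ T10 S.j Z
    = A ◁ T21 S.rR Z ≫ T21 S.m Z ≫ T10 S.j Z := by
  have h1 := S.t_piL1
  have h2 := S.t_kap
  rw [← h2]
  nth_rw 1 [← h1]
  rw [T21_comp, T21_comp, whiskerLeft_comp, whiskerLeft_comp, assoc, assoc, C0T]

def QQ : A ⊗ (A ⊗ A) ⟶ A ⊗ (A ⊗ A) :=
  A ◁ S.t₁ ≫ T22 (β_ A A).hom A ≫ A ◁ S.t₁ ≫ T22 (β_ A A).inv A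

lemma ax1x : S.QQ ≫ T22 S.t₁ A = T22 S.t₁ A ≫ A ◁ S.t₁ := by
  simp only [QQ, assoc]
  exact S.ax1

lemma short : S.QQ ≫ T21 S.m A = T21 S.m A ≫ S.t₁ := by
  rw [m_tT, reassoc_of% S.ax1x, assoc, T10_nat]

lemma Itau : T21 S.m A ≫ S.tau = A ◁ S.tau ≫ T22 S.tau A ≫ A ◁ S.m := by
  have hb : T21 S.m A ≫ (β_ A A).inv = A ◁ (β_ A A).inv ≫ T22 (β_ A A).inv A ≫ A ◁ S.m := by
    rw [← N1]; simp
  have h2 := A ◁ (β_ A A).inv ≫= N2 (A := A) S.tau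
  rw [← whiskerLeft_comp_assoc, Iso.inv_hom_id] at h2
  simp only [whiskerLeft_id, id_comp] at h2
  rw [tau, ← reassoc_of% S.short, QQ]
  simp only [assoc, hb]
  rw [reassoc_of% (YBinv A)]
  have h3 : ∀ {P : C} (g : A ⊗ A ⊗ A ⟶ P), A ◁ S.t₁ ≫ A ◁ (β_ A A).inv ≫ g = A ◁ S.tau ≫ g := by
    intro P g; rw [tau, whiskerLeft_comp_assoc]
  have h4 : ∀ {P : C} (g : A ⊗ A ⊗ A ⟶ P), A ◁ (β_ A A).hom ≫ A ◁ (β_ A A).inv ≫ g = g := by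
    intro P g; simp
  rw [h3, reassoc_of% h2, reassoc_of% (T22_braid_inv A A A), h4, h3]
  rfl

lemma assoc0 : A ◁ S.m ≫ S.m = T21 S.m A ≫ S.m := by
  have : A ◁ S.m = A ◁ S.tau ≫ A ◁ S.pp := by rw [← whiskerLeft_comp, tau_pp]
  rw [this, assoc, VIII]
  nth_rw 3 [m_tau]
  rw [reassoc_of% S.Itau]

lemma assocT (Z : C) : A ◁ T21 S.m Z ≫ T21 S.m Z = T21 S.m (A ⊗ Z) ≫ T21 S.m Z := by
  have := K3_end A A A Z S.assoc0
  simp only [comp_whiskerRight, assoc, K3_b, K3_a, K3_d, K3_c, K3_f, K3_e, K3_g, K3_h] at this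
  simpa only [comp_id] using this

lemma NL {X Y : C} (hY : Y ∈ 𝒴) {g h : X ⟶ A ⊗ Y} (e : A ◁ g ≫ T21 S.m Y = A ◁ h ≫ T21 S.m Y) :
    g = h := S.ndl X Y hY e
lemma NL0 {X : C} {g h : X ⟶ A} (e : A ◁ g ≫ S.m = A ◁ h ≫ S.m) : g = h :=
  ndl0 S.memI S.ndl e
lemma NR0 {X : C} {g h : X ⟶ A} (e : g ▷ A ≫ S.m = h ▷ A ≫ S.m) : g = h :=
  ndr0 S.memI S.ndr e

lemma c12 : A ◁ S.t₁ ≫ T21 S.m A = T22 S.t₂ A ≫ A ◁ S.m := S.hc12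
lemma c12T (Z : C) : A ◁ T22 S.t₁ Z ≫ T21 S.m (A ⊗ Z) = T22 S.t₂ (A ⊗ Z) ≫ A ◁ T21 S.m Z := by
  have := K3_endC A A A Z S.c12
  simp only [comp_whiskerRight, assoc, K3_b, K3_a, K3_d, K3_c, K3_f, K3_e, K3_g, K3_h] at this
  simpa only [comp_id, Iso.inv_hom_id, T21_T10b, T21_R10b] using this
lemma hi21T (Z : C) : A ◁ T22 S.t₁ Z ≫ T22 S.t₂ (A ⊗ Z) = T22 S.t₂ (A ⊗ Z) ≫ A ◁ T22 S.t₁ Z := by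
  have h : A ◁ S.t₁ ≫ T22 S.t₂ A = T22 S.t₂ A ≫ A ◁ S.t₁ := S.hi21
  have := K3_end3 A A A Z h
  simp only [comp_whiskerRight, assoc, K3_b, K3_a, K3_d, K3_c, K3_f, K3_e, K3_g, K3_h] at this
  simpa only [comp_id, K3_inv] using this

lemma tlin : A ◁ S.m ≫ S.t₁ = T22 S.t₁ A ≫ A ◁ S.m := by
  apply S.NL S.memA
  rw [whiskerLeft_comp, assoc, c12, ← reassoc_of% (T22_nat S.t₂ S.m), ← whiskerLeft_comp,
    assoc0, whiskerLeft_comp, ← reassoc_of% S.c12T, T21_nat, whiskerLeft_comp, assoc]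

lemma R1 : A ◁ S.pp ≫ S.t₁ = T22 S.t₁ A ≫ A ◁ (β_ A A).hom ≫ T21 S.rR A := by
  apply S.NL S.memA
  rw [whiskerLeft_comp, assoc, c12, ← reassoc_of% (T22_nat S.t₂ S.pp), ← whiskerLeft_comp,
    VIII0]
  simp only [whiskerLeft_comp, assoc]
  rw [← reassoc_of% S.hi21T, reassoc_of% (T22_nat S.t₂), ← reassoc_of% S.c12T, T21_nat, rR_T,
    whiskerLeft_comp, assoc]

lemma R1tau : A ◁ S.pp ≫ S.tau = T22 S.tau A ≫ A ◁ S.rR := by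
  rw [tau, reassoc_of% S.R1, N1, T22_comp, assoc]
lemma R1tauT (Z : C) : A ◁ T21 S.pp Z ≫ T22 S.tau Z = T22 S.tau (A ⊗ Z) ≫ A ◁ T21 S.rR Z := by
  have := K3_endC A A A Z S.R1tau
  simp only [comp_whiskerRight, assoc, K3_b, K3_a, K3_d, K3_c, K3_f, K3_e, K3_g, K3_h] at this
  simpa only [comp_id, Iso.inv_hom_id, T22, T21, assoc] using this

lemma starpp : T21 S.pp A ≫ S.pp = A ◁ S.pp ≫ S.pp := by
  apply S.NL0
  rw [whiskerLeft_comp, assoc, VIII, reassoc_of% S.R1tauT, whiskerLeft_comp, assoc, VIII,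
    ← reassoc_of% (T22_nat S.tau)]
  congr 1
  simp only [whisker_R10]
  rw [reassoc_of% S.VII, C0pp]

lemma star : T21 S.piL1 A ≫ S.piL1 = A ◁ S.piL1 ≫ S.piL1 := by
  have h := S.starpp
  simp only [pp] at h
  rw [T21_comp, assoc, reassoc_of% (T21_braid (A := A) S.piL1), whiskerLeft_comp, assoc,
    reassoc_of% (whisker_braid (A := A) S.piL1), reassoc_of% (YB A)] at h
  have e1 : ∀ {P : C} (g : A ⊗ A ⊗ A ⟶ P), A ◁ (β_ A A).inv ≫ A ◁ (β_ A A).hom ≫ g = g := by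
    intro P g; simp
  have := A ◁ (β_ A A).inv ≫= T22 (β_ A A).inv A ≫= A ◁ (β_ A A).inv ≫= h
  simp only [e1, reassoc_of% (T22_inv_braid A A A)] at this
  exact this.symm

lemma W : T21 S.ss A ≫ S.m = A ◁ S.t₁ ≫ T21 S.m A ≫ T10 S.j A := by
  rw [ss, T21_T10, assoc, T10_nat, reassoc_of% S.c12]
lemma WT (Z : C) : A ◁ T22 S.t₁ Z ≫ T21 S.m (A ⊗ Z) ≫ T10 S.j (A ⊗ Z)
    = T21 S.ss (A ⊗ Z) ≫ T21 S.m Z := by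
  have := (K3_end A A A Z S.W).symm
  simp only [comp_whiskerRight, assoc, K3_b, K3_a, K3_d, K3_c, K3_f, K3_e, K3_g, K3_h] at this
  simpa only [comp_id, Iso.inv_hom_id, T21_T10b, T21_R10b] using this

lemma slin : A ◁ S.m ≫ S.ss = T21 S.ss A ≫ S.m := by
  apply S.NR0
  apply K3_cancel
  simp only [comp_whiskerRight, assoc, K3_b, K3_a, K3_d, K3_c, K3_f, K3_e, K3_g, K3_h]
  have h : S.QQ ≫ T21 S.rR A = T22 S.t₁ A ≫ A ◁ S.m := by
    rw [rR_T, reassoc_of% S.ax1x, ← whiskerLeft_comp, ← m_t]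
  rw [W, ← whiskerLeft_comp_assoc, ← short, whiskerLeft_comp, assoc, C1T,
    ← whiskerLeft_comp_assoc, h, whiskerLeft_comp, assoc, ← reassoc_of% (T21_nat S.m), ← T10_nat,
    reassoc_of% S.WT]

lemma R2 : A ◁ S.m ≫ S.ss = A ◁ S.t₁ ≫ T21 S.m A ≫ T10 S.j A := by
  rw [slin, W]
lemma R2T (Z : C) : A ◁ T21 S.m Z ≫ T21 S.ss Z
    = A ◁ T22 S.t₁ Z ≫ T21 S.m (A ⊗ Z) ≫ T10 S.j (A ⊗ Z) := by
  have := K3_end A A A Z S.R2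
  simp only [comp_whiskerRight, assoc, K3_b, K3_a, K3_d, K3_c, K3_f, K3_e, K3_g, K3_h] at this
  simpa only [comp_id, Iso.inv_hom_id, T21_T10b, T21_R10b] using this

lemma VIIIb : A ◁ S.piL1 ≫ S.m
    = T22 (β_ A A).hom A ≫ A ◁ S.t₁ ≫ T22 (β_ A A).inv A ≫ T21 S.m A ≫ T10 S.j A := by
  have e1 : ∀ {P : C} (g : A ⊗ A ⊗ A ⟶ P), A ◁ (β_ A A).inv ≫ A ◁ (β_ A A).hom ≫ g = g := by
    intro P g; simp
  have h := A ◁ (β_ A A).inv ≫= S.VIII0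
  rw [pp, whiskerLeft_comp, assoc, e1] at h
  rw [h]
  have h3 := T22 (β_ A A).hom A ≫= N3 (A := A) S.t₁
  rw [reassoc_of% (T22_braid_inv A A A)] at h3
  rw [reassoc_of% h3, e1]
lemma VIIIbT (Z : C) : A ◁ T21 S.piL1 Z ≫ T21 S.m Z
    = T22 (β_ A A).hom (A ⊗ Z) ≫ A ◁ T22 S.t₁ Z ≫ T22 (β_ A A).inv (A ⊗ Z) ≫
      T21 S.m (A ⊗ Z) ≫ T10 S.j (A ⊗ Z) := by
  have := K3_end A A A Z S.VIIIb
  simp only [comp_whiskerRight, assoc, K3_b, K3_a, K3_d, K3_c, K3_f, K3_e, K3_g, K3_h] at this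
  simpa only [comp_id, Iso.inv_hom_id, T21_T10b, T21_R10b] using this

lemma piL1lin : A ◁ S.m ≫ S.piL1 = T21 S.piL1 A ≫ S.m := by
  apply S.NL0
  rw [whiskerLeft_comp, assoc, VIIIb, whiskerLeft_comp, assoc, assoc0, reassoc_of% S.VIIIbT,
    ← reassoc_of% (T22_nat (β_ A A).hom), ← whiskerLeft_comp_assoc, tlin, whiskerLeft_comp, assoc,
    ← reassoc_of% (T22_nat (β_ A A).inv), ← reassoc_of% (T21_nat S.m), ← T10_nat]

def Xm : A ⊗ (A ⊗ A) ⟶ A ⊗ (A ⊗ A) :=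
  A ◁ (β_ A A).inv ≫ T22 S.e₁ A ≫ A ◁ (β_ A A).hom
lemma ax6x : T22 S.t₁ A ≫ A ◁ S.e₁ = S.Xm ≫ T22 S.t₁ A := by
  simp only [Xm, assoc]
  exact S.ax6
lemma ax5x : A ◁ S.t₁ ≫ T22 S.e₁ A = T22 S.e₁ A ≫ A ◁ S.t₁ := S.ax5
lemma X1 : T22 S.t₁ A ≫ A ◁ S.piL1 = S.Xm ≫ T21 S.rR A := by
  rw [piL1_eq, whiskerLeft_comp, reassoc_of% S.ax6x, rR_T]
lemma X2 : T21 S.m A ≫ S.e₁ = S.Xm ≫ T21 S.m A := by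
  rw [m_tT, assoc, T10_nat, reassoc_of% S.ax6x]
lemma V1 : T21 S.piL1 A ≫ S.t₁ = A ◁ S.t₁ ≫ T21 S.piL1 A := by
  rw [piL1_T, assoc, T10_nat, reassoc_of% S.ax5x]
lemma V2 : A ◁ S.t₁ ≫ T21 S.piBarR1c A = T22 S.e₁ A ≫ A ◁ S.m := by
  rw [kap_T, reassoc_of% S.ax5x, ← whiskerLeft_comp, ← m_t]

lemma R6 (hE : Epi (A ◁ T21 S.m A)) :
    T21 S.ss A ≫ S.piL1 = A ◁ S.e₁ ≫ T21 S.m A ≫ T10 S.j A := by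
  rw [← cancel_epi (A ◁ T21 S.m A), reassoc_of% S.R2T, T10_nat, reassoc_of% (T21_nat S.m),
    ← whiskerLeft_comp_assoc, X1, whiskerLeft_comp, assoc, ← C1T, ← whiskerLeft_comp_assoc, ← X2,
    whiskerLeft_comp, assoc]
lemma R6T (hE : Epi (A ◁ T21 S.m A)) (Z : C) : T21 S.ss (A ⊗ Z) ≫ T21 S.piL1 Z
    = A ◁ T22 S.e₁ Z ≫ T21 S.m (A ⊗ Z) ≫ T10 S.j (A ⊗ Z) := by
  have := K3_end A A A Z (S.R6 hE)
  simp only [comp_whiskerRight, assoc, K3_b, K3_a, K3_d, K3_c, K3_f, K3_e, K3_g, K3_h] at this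
  simpa only [comp_id, Iso.inv_hom_id, T21_T10b, T21_R10b] using this

lemma R5 (hE : Epi (A ◁ T21 S.m A)) (hE2 : Epi (A ◁ A ◁ S.m)) :
    A ◁ S.piL1 ≫ S.ss = T21 S.ss A ≫ S.piL1 := by
  rw [← cancel_epi (A ◁ A ◁ S.m), ← whiskerLeft_comp_assoc, piL1lin, whiskerLeft_comp, assoc, R2,
    ← whiskerLeft_comp_assoc, V1, whiskerLeft_comp, assoc, C0T, ← whiskerLeft_comp_assoc, V2,
    whiskerLeft_comp, assoc, ← reassoc_of% (T21_nat S.m), ← T10_nat, ← reassoc_of% (S.R6T hE),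
    ← piL1lin, reassoc_of% (T21_nat S.ss)]

lemma VIIIT (Z : C) : A ◁ T21 S.pp Z ≫ T21 S.m Z
    = T22 S.tau (A ⊗ Z) ≫ A ◁ T21 S.m Z ≫ A ◁ T10 S.j Z := by
  have := K3_end A A A Z S.VIII
  simp only [comp_whiskerRight, assoc, K3_b, K3_a, K3_d, K3_c, K3_f, K3_e, K3_g, K3_h] at this
  simpa only [comp_id, Iso.inv_hom_id, T21_T10b, T21_R10b] using this

section Base
variable {L : C} {p : A ⟶ L} {n₁ : L ⊗ A ⟶ A}

lemma pN (hn₁ : (p ▷ A) ≫ n₁ = S.piL1) : A ◁ p ≫ (β_ A L).hom ≫ n₁ = S.pp := by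
  rw [BraidedCategory.braiding_naturality_right_assoc, hn₁, pp]

lemma Phi_inj (hndn₁ : NdRightOn n₁ 𝒴) {X : C} {g h : X ⟶ L ⊗ A}
    (e : A ◁ A ◁ g ≫ A ◁ T21 ((β_ A L).hom ≫ n₁) A ≫ T21 S.m A
      = A ◁ A ◁ h ≫ A ◁ T21 ((β_ A L).hom ≫ n₁) A ≫ T21 S.m A) : g = h := by
  apply hndn₁ X A S.memA
  apply S.NL S.memA
  have := e
  rw [← whiskerLeft_comp_assoc, ← whiskerLeft_comp_assoc] at this
  exact this

lemma Phi_t (hn₁ : (p ▷ A) ≫ n₁ = S.piL1) :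
    A ◁ A ◁ (S.t₁ ≫ p ▷ A) ≫ A ◁ T21 ((β_ A L).hom ≫ n₁) A ≫ T21 S.m A
      = A ◁ A ◁ S.m ≫ T22 S.tau A ≫ A ◁ S.ss := by
  have h : A ◁ p ▷ A ≫ T21 ((β_ A L).hom ≫ n₁) A = T21 S.pp A := by
    have : ∀ N : A ⊗ L ⟶ A, A ◁ p ▷ A ≫ T21 N A = T21 (A ◁ p ≫ N) A := by
      intro N; simp [T21]
    rw [this, S.pN hn₁]
  rw [whiskerLeft_comp, whiskerLeft_comp, assoc, ← whiskerLeft_comp_assoc A (A ◁ p ▷ A), h,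
    VIIIT, ← reassoc_of% (T22_nat S.tau), ← reassoc_of% (T22_nat S.tau)]
  simp only [← whiskerLeft_comp]
  rw [R2]

lemma exists_d (hm : RegularEpi S.m) (hn₁ : (p ▷ A) ≫ n₁ = S.piL1) (hndn₁ : NdRightOn n₁ 𝒴) :
    ∃ d : A ⟶ L ⊗ A, S.m ≫ d = S.t₁ ≫ p ▷ A := by
  refine ⟨Cofork.IsColimit.desc hm.isColimit (S.t₁ ≫ p ▷ A) ?_,
    Cofork.IsColimit.π_desc' hm.isColimit _ _⟩
  apply S.Phi_inj hndn₁
  rw [whiskerLeft_comp, whiskerLeft_comp, assoc, Phi_t _ hn₁, whiskerLeft_comp, whiskerLeft_comp,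
    assoc, Phi_t _ hn₁]
  have := congrArg (fun f => A ◁ A ◁ f) hm.w
  simp only [whiskerLeft_comp] at this
  rw [reassoc_of% this]

lemma Phi_d (hE2 : Epi (A ◁ A ◁ S.m)) (hn₁ : (p ▷ A) ≫ n₁ = S.piL1)
    {d : A ⟶ L ⊗ A} (hd : S.m ≫ d = S.t₁ ≫ p ▷ A) :
    A ◁ A ◁ d ≫ A ◁ T21 ((β_ A L).hom ≫ n₁) A ≫ T21 S.m A = T22 S.tau A ≫ A ◁ S.ss := by
  rw [← cancel_epi (A ◁ A ◁ S.m), ← Phi_t _ hn₁, ← hd]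
  simp only [whiskerLeft_comp, assoc]

lemma Phi_dT (hE2 : Epi (A ◁ A ◁ S.m)) (hn₁ : (p ▷ A) ≫ n₁ = S.piL1)
    {d : A ⟶ L ⊗ A} (hd : S.m ≫ d = S.t₁ ≫ p ▷ A) (Z : C) :
    A ◁ A ◁ (d ▷ Z ≫ (α_ L A Z).hom) ≫ A ◁ T21 ((β_ A L).hom ≫ n₁) (A ⊗ Z) ≫ T21 S.m (A ⊗ Z)
      = T22 S.tau (A ⊗ Z) ≫ A ◁ T21 S.ss Z := by
  have := K3_endC A A A Z (S.Phi_d hE2 hn₁ hd)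
  simp only [comp_whiskerRight, assoc] at this
  rw [K3_b, K3_b, K3_c, K3_d, K3_a] at this
  simp only [Iso.inv_hom_id, comp_id] at this
  rw [← this, ← whiskerLeft_comp_assoc, ← whiskerLeft_comp_assoc]
  congr 2
  simp only [T22, T21]
  monoidal

lemma R4 (hE : Epi (A ◁ T21 S.m A)) (hE2 : Epi (A ◁ A ◁ S.m)) (hn₁ : (p ▷ A) ≫ n₁ = S.piL1)
    (hndn₁ : NdRightOn n₁ 𝒴)
    {d : A ⟶ L ⊗ A} (hd : S.m ≫ d = S.t₁ ≫ p ▷ A) :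
    d ▷ A ≫ (α_ L A A).hom ≫ L ◁ S.piL1 = S.piL1 ≫ d := by
  apply S.Phi_inj hndn₁
  have hT := S.Phi_dT hE2 hn₁ hd A
  rw [← assoc (d ▷ A)]
  generalize d ▷ A ≫ (α_ L A A).hom = f at hT ⊢
  rw [whiskerLeft_comp, whiskerLeft_comp, assoc,
    ← whiskerLeft_comp_assoc A (A ◁ L ◁ S.piL1), ← T21_nat, whiskerLeft_comp, assoc, ← T21_nat,
    reassoc_of% hT, ← whiskerLeft_comp, ← R5 _ hE hE2]
  simp only [whiskerLeft_comp, assoc]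
  rw [Phi_d _ hE2 hn₁ hd, reassoc_of% (T22_nat S.tau)]

end Base

end Lem
end RWMB


lemma ND2 {𝒴 : Set C} {A L X : C} {n₁ : L ⊗ A ⟶ A} (hL : L ∈ 𝒴) (hn : NdRightOn n₁ 𝒴)
    {g h : X ⟶ L ⊗ L}
    (e : g ▷ A ≫ (α_ L L A).hom ≫ L ◁ n₁ = h ▷ A ≫ (α_ L L A).hom ≫ L ◁ n₁) : g = h := by
  have hb : ∀ k : X ⟶ L ⊗ L, A ◁ k ≫ T22 (β_ A L).hom L ≫ L ◁ (β_ A L).hom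
      = (β_ A X).hom ≫ k ▷ A ≫ (α_ L L A).hom := by
    intro k
    have := BraidedCategory.braiding_naturality_right A k =≫ (α_ L L A).hom
    simpa [T22] using this
  have key : ∀ k : X ⟶ L ⊗ L, (A ◁ (k ≫ (β_ L L).inv) ≫ T21 ((β_ A L).hom ≫ n₁) L) ≫ (β_ A L).hom
      = (β_ A X).hom ≫ k ▷ A ≫ (α_ L L A).hom ≫ L ◁ n₁ := by
    intro k
    rw [assoc, T21_braid, whiskerLeft_comp, assoc, ← whiskerLeft_comp_assoc A (β_ L L).inv,
      Iso.inv_hom_id, whiskerLeft_id, id_comp, whiskerLeft_comp, reassoc_of% hb]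
  have h1 : g ≫ (β_ L L).inv = h ≫ (β_ L L).inv := by
    apply hn X L hL
    change A ◁ _ ≫ T21 _ _ = A ◁ _ ≫ T21 _ _
    rw [← cancel_mono (β_ A L).hom, key, key, e]
  exact (cancel_mono _).1 h1

lemma regL {X Y : C} {f : X ⟶ Y} (hf : Nonempty (RegularEpi f)) (Z : C)
    (pr : PreservesColimitsOfShape WalkingParallelPair (tensorLeft Z)) :
    Nonempty (RegularEpi (Z ◁ f)) := by
  obtain ⟨r⟩ := hf
  exact ⟨{ W := Z ⊗ r.W, left := Z ◁ r.left, right := Z ◁ r.right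
           w := by rw [← whiskerLeft_comp, r.w, whiskerLeft_comp]
           isColimit := isColimitCoforkMapOfIsColimit (tensorLeft Z) r.w r.isColimit }⟩

lemma regR {X Y : C} {f : X ⟶ Y} (hf : Nonempty (RegularEpi f)) (Z : C)
    (pr : PreservesColimitsOfShape WalkingParallelPair (tensorRight Z)) :
    Nonempty (RegularEpi (f ▷ Z)) := by
  obtain ⟨r⟩ := hf
  exact ⟨{ W := r.W ⊗ Z, left := r.left ▷ Z, right := r.right ▷ Z
           w := by rw [← comp_whiskerRight, r.w, comp_whiskerRight]
           isColimit := isColimitCoforkMapOfIsColimit (tensorRight Z) r.w r.isColimit }⟩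

lemma regEpi {X Y : C} {f : X ⟶ Y} (hf : Nonempty (RegularEpi f)) : Epi f := by
  obtain ⟨r⟩ := hf
  exact r.epi

lemma whisk_desc {X Y Z P : C} {f g : X ⟶ Y} {p : Y ⟶ Z} (hpc : f ≫ p = g ≫ p)
    (hpu : ∀ {X : C} (h : Y ⟶ X), f ≫ h = g ≫ h → ∃! k : Z ⟶ X, p ≫ k = h)
    (W : C) (pr : PreservesColimitsOfShape WalkingParallelPair (tensorLeft W))
    (h : W ⊗ Y ⟶ P) (e : W ◁ f ≫ h = W ◁ g ≫ h) : ∃ k : W ⊗ Z ⟶ P, W ◁ p ≫ k = h := by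
  have hc : IsColimit (Cofork.ofπ p hpc) :=
    Cofork.IsColimit.ofExistsUnique (fun s => hpu s.π s.condition)
  have hcW := isColimitCoforkMapOfIsColimit (tensorLeft W) hpc hc
  exact ⟨Cofork.IsColimit.desc hcW h e, Cofork.IsColimit.π_desc' hcW _ _⟩

lemma reg_p {X Y Z : C} {f g : X ⟶ Y} {p : Y ⟶ Z} (hpc : f ≫ p = g ≫ p)
    (hpu : ∀ {X : C} (h : Y ⟶ X), f ≫ h = g ≫ h → ∃! k : Z ⟶ X, p ≫ k = h) :
    Nonempty (RegularEpi p) :=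
  ⟨{ W := X, left := f, right := g, w := hpc,
     isColimit := Cofork.IsColimit.ofExistsUnique (fun s => hpu s.π s.condition) }⟩


/-- Theorem 3.1: the base object `L` of a regular weak multiplier
bimonoid carries a coseparable comonoid structure `(L, δ, ε)` with bicomodule
retraction `μ` of `δ`. -/
theorem base_object_coseparable_comonoid
    [HasCoequalizers C]
    (presL : ∀ X : C, PreservesColimitsOfShape WalkingParallelPair (tensorLeft X))
    (presR : ∀ X : C, PreservesColimitsOfShape WalkingParallelPair (tensorRight X))
    (regcomp : ∀ {X Y Z : C} (f : X ⟶ Y) (g : Y ⟶ Z),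
      Nonempty (RegularEpi f) → Nonempty (RegularEpi g) → Nonempty (RegularEpi (f ≫ g)))
    {A : C} {𝒴 : Set C} (S : RWMB A 𝒴)
    (hmreg : Nonempty (RegularEpi S.m))
    -- the base object: `p : A ⟶ L` is the coequalizer of `⊓ᴸ₁` and `⊓̄ᴿ₁ ∘ c⁻¹`
    (L : C) (p : A ⟶ L)
    (hpc : S.piL1 ≫ p = S.piBarR1c ≫ p)
    (hpu : ∀ {X : C} (h : A ⟶ X), S.piL1 ≫ h = S.piBarR1c ≫ h →
      ∃! k : L ⟶ X, p ≫ k = h)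
    (memL : L ∈ 𝒴)
    -- `n₁` is the unique morphism with `n₁ ∘ (p ⊗ 1) = ⊓ᴸ₁`
    (n₁ : L ⊗ A ⟶ A) (hn₁ : (p ▷ A) ≫ n₁ = S.piL1)
    -- `n₁` is non-degenerate on the right with respect to `𝒴`
    (hndn₁ : NdRightOn n₁ 𝒴) :
    ∃ (μ : L ⊗ L ⟶ L) (δ : L ⟶ L ⊗ L) (ε : L ⟶ 𝟙_ C),
      -- (1) `μ` is uniquely determined by `μ ∘ (1 ⊗ p) = p ∘ n₁`
      ((L ◁ p) ≫ μ = n₁ ≫ p) ∧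
      (∀ μ' : L ⊗ L ⟶ L, (L ◁ p) ≫ μ' = n₁ ≫ p → μ' = μ) ∧
      -- `μ` is associative
      ((L ◁ μ) ≫ μ = (α_ L L L).inv ≫ (μ ▷ L) ≫ μ) ∧
      -- `n₁` is an associative action with respect to `μ`
      ((L ◁ n₁) ≫ n₁ = (α_ L L A).inv ≫ (μ ▷ A) ≫ n₁) ∧
      -- (2) `δ` is uniquely determined by `δ ∘ p ∘ m = (p ⊗ p) ∘ t₁`
      (S.m ≫ p ≫ δ = S.t₁ ≫ (p ▷ A) ≫ (L ◁ p)) ∧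
      (∀ δ' : L ⟶ L ⊗ L, S.m ≫ p ≫ δ' = S.t₁ ≫ (p ▷ A) ≫ (L ◁ p) → δ' = δ) ∧
      -- `δ` is coassociative
      (δ ≫ (L ◁ δ) = δ ≫ (δ ▷ L) ≫ (α_ L L L).hom) ∧
      -- (3) `μ ∘ δ = 1`
      (δ ≫ μ = 𝟙 L) ∧
      -- (4) `δ` is a morphism of `L`-bimodules
      ((L ◁ δ) ≫ (α_ L L L).inv ≫ (μ ▷ L) = μ ≫ δ) ∧
      (μ ≫ δ = (δ ▷ L) ≫ (α_ L L L).hom ≫ (L ◁ μ)) ∧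
      -- (5) `ε` is a counit for `δ` and satisfies `ε ∘ p = j`
      (p ≫ ε = S.j) ∧
      (δ ≫ (ε ▷ L) ≫ (λ_ L).hom = 𝟙 L) ∧
      (δ ≫ (L ◁ ε) ≫ (ρ_ L).hom = 𝟙 L) := by
  have hmE : Epi S.m := regEpi hmreg
  have hpreg : Nonempty (RegularEpi p) := reg_p hpc hpu
  have hpE : Epi p := regEpi hpreg
  have hE2 : Epi (A ◁ A ◁ S.m) := regEpi (regL (regL hmreg A (presL A)) A (presL A))
  have hE1 : Epi (A ◁ S.m) := regEpi (regL hmreg A (presL A))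
  have hE : Epi (A ◁ T21 S.m A) := by
    have h1 : Epi (A ◁ S.m ▷ A) := regEpi (regL (regR hmreg A (presR A)) A (presL A))
    have : A ◁ T21 S.m A = A ◁ (α_ A A A).inv ≫ A ◁ S.m ▷ A := by
      simp [T21]
    rw [this]
    exact epi_comp _ _
  have hpA : Epi (p ▷ A) := regEpi (regR hpreg A (presR A))
  have hpAA : Epi (p ▷ A ▷ A) := regEpi (regR (regR hpreg A (presR A)) A (presR A))
  have hLp : Epi (L ◁ p) := regEpi (regL hpreg L (presL L))
  have hLpA : Epi (L ◁ p ▷ A) := regEpi (regL (regR hpreg A (presR A)) L (presL L))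
  have hLLp : Epi (L ◁ L ◁ p) := regEpi (regL (regL hpreg L (presL L)) L (presL L))
  obtain ⟨d, hd⟩ := S.exists_d hmreg.some hn₁ hndn₁
  have hR4 := S.R4 hE hE2 hn₁ hndn₁ hd
  -- the key associativity
  have ha : n₁ ▷ A ≫ p ▷ A ≫ n₁ = (α_ L A A).hom ≫ L ◁ S.piL1 ≫ n₁ := by
    rw [← cancel_epi (p ▷ A ▷ A)]
    have hs := (α_ A A A).hom ≫= S.star
    simp only [T21, assoc, Iso.hom_inv_id_assoc] at hs
    rw [associator_naturality_left_assoc, ← whisker_exchange_assoc, hn₁, ← hs,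
      ← comp_whiskerRight_assoc, hn₁]
  obtain ⟨μ, hμ⟩ := whisk_desc hpc hpu L (presL L) (n₁ ≫ p) (by
    apply ndr0 S.memI hndn₁
    have key : ∀ f : A ⊗ A ⟶ A, (L ◁ f ≫ n₁ ≫ p) ▷ A ≫ n₁
        = (α_ L (A ⊗ A) A).hom ≫ L ◁ ((f ≫ p) ▷ A ≫ n₁) ≫ n₁ := by
      intro f
      simp only [comp_whiskerRight, assoc]
      rw [ha, ← hn₁]
      simp
    rw [key, key, hpc])
  have hact : (L ◁ n₁) ≫ n₁ = (α_ L L A).inv ≫ (μ ▷ A) ≫ n₁ := by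
    rw [← cancel_epi (L ◁ p ▷ A), ← whiskerLeft_comp_assoc, hn₁,
      associator_inv_naturality_middle_assoc, ← comp_whiskerRight_assoc, hμ, comp_whiskerRight,
      assoc, ha]
    simp
  have hdp : ∀ f : A ⊗ A ⟶ A, (f ≫ d ≫ L ◁ p) ▷ A ≫ (α_ L L A).hom ≫ L ◁ n₁
      = (f ≫ p) ▷ A ≫ n₁ ≫ d := by
    intro f
    simp only [comp_whiskerRight, assoc]
    rw [associator_naturality_middle_assoc, ← whiskerLeft_comp, hn₁, hR4, reassoc_of% hn₁]
  have hdp1 : (d ≫ L ◁ p) ▷ A ≫ (α_ L L A).hom ≫ L ◁ n₁ = p ▷ A ≫ n₁ ≫ d := by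
    simp only [comp_whiskerRight, assoc]
    rw [associator_naturality_middle_assoc, ← whiskerLeft_comp, hn₁, hR4, reassoc_of% hn₁]
  obtain ⟨δ, hδ, -⟩ := hpu (d ≫ L ◁ p) (by
    apply ND2 memL hndn₁
    rw [hdp, hdp, hpc])
  obtain ⟨ε, hε, -⟩ := hpu S.j (by
    rw [S.piL1_eq, S.kap_eq, assoc, assoc, R10_T10])
  have hδm : S.m ≫ p ≫ δ = S.t₁ ≫ (p ▷ A) ≫ (L ◁ p) := by
    rw [hδ, reassoc_of% hd]
  have hpm : ∀ {X : C} {f g : L ⟶ X}, S.m ≫ p ≫ f = S.m ≫ p ≫ g → f = g := by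
    intro X f g h
    rwa [cancel_epi, cancel_epi] at h
  have hpp : ∀ {X : C} {f g : L ⊗ L ⟶ X}, p ▷ A ≫ L ◁ p ≫ f = p ▷ A ≫ L ◁ p ≫ g → f = g := by
    intro X f g h
    rwa [cancel_epi, cancel_epi] at h
  have hdl : S.piL1 ≫ d = A ◁ d ≫ (α_ A L A).inv ≫ p ▷ L ▷ A ≫ μ ▷ A := by
    rw [← cancel_epi (A ◁ S.m), reassoc_of% S.piL1lin, hd, reassoc_of% S.V1,
      ← whiskerLeft_comp_assoc, hd, whiskerLeft_comp, assoc,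
      associator_inv_naturality_middle_assoc, T21, assoc]
    simp only [← comp_whiskerRight]
    rw [whisker_exchange_assoc, hμ, reassoc_of% hn₁]
  refine ⟨μ, δ, ε, hμ, ?_, ?_, hact, hδm, ?_, ?_, ?_, ?_, ?_, hε, ?_, ?_⟩
  · intro μ' h
    rw [← cancel_epi (L ◁ p), h, hμ]
  · rw [← cancel_epi (L ◁ L ◁ p), ← whiskerLeft_comp_assoc, hμ, whiskerLeft_comp, assoc, hμ,
      reassoc_of% hact, associator_inv_naturality_right_assoc, whisker_exchange_assoc, hμ]
  · intro δ' h
    exact hpm (h.trans hδm.symm)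
  · apply hpm
    rw [← cancel_epi (A ◁ S.m)]
    have e1 : A ◁ S.m ≫ S.m ≫ p ≫ δ ≫ L ◁ δ
        = T22 S.t₁ A ≫ A ◁ S.t₁ ≫ p ▷ (A ⊗ A) ≫ L ◁ p ▷ A ≫ L ◁ L ◁ p := by
      rw [reassoc_of% hδm, ← whiskerLeft_comp, hδ, reassoc_of% S.tlin, whisker_exchange_assoc,
        ← whiskerLeft_comp, reassoc_of% hd, whiskerLeft_comp, ← whisker_exchange_assoc,
        whiskerLeft_comp]
    have e2 : A ◁ S.m ≫ S.m ≫ p ≫ δ ≫ δ ▷ L ≫ (α_ L L L).hom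
        = S.QQ ≫ T22 S.t₁ A ≫ p ▷ (A ⊗ A) ≫ L ◁ p ▷ A ≫ L ◁ L ◁ p := by
      rw [reassoc_of% S.assoc0, reassoc_of% hδm, ← reassoc_of% S.short,
        whisker_exchange_assoc]
      have h := congrArg (fun f => f ▷ A) hδm
      simp only [comp_whiskerRight] at h
      rw [T21, assoc, reassoc_of% h]
      simp [T22]
    rw [e1, e2, reassoc_of% S.ax1x]
  · apply hpm
    rw [reassoc_of% hδm, hμ, reassoc_of% hn₁, reassoc_of% S.t_piL1, comp_id]
  · apply hpp
    rw [reassoc_of% hμ, reassoc_of% hn₁, hδ, reassoc_of% hdl, ← whiskerLeft_comp_assoc L p δ, hδ,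
      ← whisker_exchange_assoc]
    rw [whiskerLeft_comp, assoc, associator_inv_naturality_left_assoc,
      associator_inv_naturality_right_assoc, ← whisker_exchange, ← whisker_exchange_assoc]
  · apply hpp
    rw [reassoc_of% hμ, hδ, whisker_exchange_assoc, associator_naturality_right_assoc,
      ← whiskerLeft_comp, hμ, whiskerLeft_comp, ← comp_whiskerRight_assoc, hδ,
      reassoc_of% hdp1]
  · apply hpm
    rw [reassoc_of% hδm, whisker_exchange_assoc, ← comp_whiskerRight_assoc, hε,
      leftUnitor_naturality, comp_id, S.hm₁]
    simp
  · apply hpm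
    rw [reassoc_of% hδm, ← whiskerLeft_comp_assoc, hε, ← whisker_exchange_assoc,
      rightUnitor_naturality, comp_id]
    have : S.t₁ ≫ A ◁ S.j ≫ (ρ_ A).hom = S.rR := rfl
    rw [reassoc_of% this, ← S.t_kap, assoc, ← hpc, reassoc_of% S.t_piL1]

end WeakMultiplierBimonoid
end
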